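/- arXiv:2309.12649 — 2 statements merged into one kernel-verified Lean document; each statement's English description precedes it below -/
import Mathlib

section
/- For every integer N ≥ 2 and all x, t ∈ [0,1], 1 + N² Σ_{i=N+1}^∞ 1/i² − N Σ_{i=N}^∞ 1/i² ≤ (x+N−1)(t+N−1) Σ_{i=N}^∞ 1/(x+i+t−1)² ≤ 1 + (N−1)² Σ_{i=N}^∞ 1/i². -/
open MeasureTheory Set Real Filter

/-! Write `ψ₁` for the trigamma function and `M = N - 1`. Since `ψ₁ y = 1 / y ^ 2 + ψ₁ (y + 1)`,
the claim is `M (M + 1) ψ₁ (M + 1) ≤ (M + x) (M + t) ψ₁ (M + x + t) ≤ M ^ 2 ψ₁ M`.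

On the left, `(M + x) (M + t)` is at least `M (M + x + t)` and at least `(M + 1) (M + x + t - 1)`,
so it is enough that `y ψ₁ y` decreases (for `x + t ≤ 1`) and that `(y - 1) ψ₁ y` increases (for
`1 ≤ x + t`). Both follow by comparing `ψ₁` with telescoping series. On the right, AM-GM reduces
the claim to `x = t`, that is, to `a ^ 2 ψ₁ (2 a - M) ≤ M ^ 2 ψ₁ M` for `M ≤ a ≤ M + 1`. The left
side is a convex function of `a⁻¹`, so only `a = M` and `a = M + 1` have to be checked. -/

open scoped Topology

section Telescoping

theorem sub_le_tsum_of_sub_succ_le {α : Type*} [AddCommGroup α] [PartialOrder α]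
    [IsOrderedAddMonoid α] [TopologicalSpace α] [ContinuousSub α] [OrderClosedTopology α]
    {f g : ℕ → α} {l : α} (hf : Summable f) (hg : Tendsto g atTop (𝓝 l))
    (hle : ∀ i, g i - g (i + 1) ≤ f i) : g 0 - l ≤ ∑' i, f i := by
  refine le_of_tendsto_of_tendsto' (hg.const_sub (g 0)) hf.tendsto_sum_tsum_nat fun n => ?_
  rw [← Finset.sum_range_sub']
  exact Finset.sum_le_sum fun i _ => hle i

variable {f F : ℝ → ℝ} {a y : ℝ}

theorem tendsto_comp_add_natCast {β : Type*} {F : ℝ → β} {l : Filter β}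
    (hF : Tendsto F atTop l) (y : ℝ) : Tendsto (fun i : ℕ => F (y + i)) atTop l :=
  hF.comp (tendsto_atTop_add_const_left _ _ tendsto_natCast_atTop_atTop)

theorem le_tsum_add_natCast (hf : Summable fun i : ℕ => f (y + i)) (hF : Tendsto F atTop (𝓝 0))
    (hle : ∀ u, y ≤ u → F u - F (u + 1) ≤ f u) : F y ≤ ∑' i : ℕ, f (y + i) := by
  have h := sub_le_tsum_of_sub_succ_le hf (tendsto_comp_add_natCast hF y) fun i => by
    simpa only [Nat.cast_succ, add_assoc] using hle (y + i) (by simp)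
  simpa only [Nat.cast_zero, add_zero, sub_zero] using h

theorem tsum_add_natCast_le (hf : Summable fun i : ℕ => f (y + i)) (hF : Tendsto F atTop (𝓝 0))
    (hle : ∀ u, y ≤ u → f u ≤ F u - F (u + 1)) : ∑' i : ℕ, f (y + i) ≤ F y := by
  have h := le_tsum_add_natCast (f := fun u => -f u) (F := fun u => -F u) hf.neg
    (by simpa only [neg_zero] using hF.neg) fun u hu => by linarith [hle u hu]
  rw [tsum_neg] at h
  exact neg_le_neg_iff.1 h

-- Formally, the difference is the series of the values `f u - (F u - F (u + 1))` at `u = y + i`.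
theorem antitoneOn_tsum_add_natCast_sub (hf : ∀ y ∈ Ioi a, Summable fun i : ℕ => f (y + i))
    (hF : Tendsto F atTop (𝓝 0))
    (hanti : AntitoneOn (fun u => f u - (F u - F (u + 1))) (Ioi a)) :
    AntitoneOn (fun y => ∑' i : ℕ, f (y + i) - F y) (Ioi a) := by
  intro y hy z hz hyz
  have hG : Tendsto (fun i : ℕ => F (y + i) - F (z + i)) atTop (𝓝 0) := by
    simpa only [sub_zero] using
      (tendsto_comp_add_natCast hF y).sub (tendsto_comp_add_natCast hF z)
  have h := sub_le_tsum_of_sub_succ_le ((hf y hy).sub (hf z hz)) hG fun i => by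
    have hi : (0 : ℝ) ≤ i := i.cast_nonneg
    have := hanti (lt_add_of_lt_of_nonneg hy hi) (lt_add_of_lt_of_nonneg hz hi)
      (add_le_add_left hyz (i : ℝ))
    simp only [Nat.cast_succ, ← add_assoc] at this ⊢
    linarith
  rw [(hf y hy).tsum_sub (hf z hz)] at h
  simp only [Nat.cast_zero, add_zero] at h
  linarith

theorem monotoneOn_tsum_add_natCast_sub (hf : ∀ y ∈ Ioi a, Summable fun i : ℕ => f (y + i))
    (hF : Tendsto F atTop (𝓝 0))
    (hmono : MonotoneOn (fun u => f u - (F u - F (u + 1))) (Ioi a)) :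
    MonotoneOn (fun y => ∑' i : ℕ, f (y + i) - F y) (Ioi a) := by
  have h := antitoneOn_tsum_add_natCast_sub (f := fun u => -f u) (F := fun u => -F u)
    (fun y hy => (hf y hy).neg) (by simpa only [neg_zero] using hF.neg) fun u hu v hv huv => by
      linarith [hmono hu hv huv]
  intro y hy z hz hyz
  have := h hy hz hyz
  simp only [tsum_neg] at this
  linarith

end Telescoping

theorem convexOn_tsum {ι E : Type*} [AddCommMonoid E] [SMul ℝ E] {s : Set E} {f : ι → E → ℝ}
    (hs : Convex ℝ s) (hf : ∀ i, ConvexOn ℝ s (f i)) (hsum : ∀ x ∈ s, Summable fun i => f i x) :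
    ConvexOn ℝ s fun x => ∑' i, f i x := by
  refine ⟨hs, fun x hx y hy p q hp hq hpq => ?_⟩
  have hx' := (hsum x hx).const_smul p
  have hy' := (hsum y hy).const_smul q
  rw [← (hsum x hx).tsum_const_smul, ← (hsum y hy).tsum_const_smul, ← hx'.tsum_add hy']
  exact (hsum _ (hs hx hy hp hq hpq)).tsum_le_tsum (fun i => (hf i).2 hx hy hp hq hpq)
    (hx'.add hy')

theorem convexOn_one_div_add_mul_sq (b c : ℝ) :
    ConvexOn ℝ {s | 0 < b + c * s} fun s => 1 / (b + c * s) ^ 2 := by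
  have h := (convexOn_zpow (𝕜 := ℝ) (-2)).comp_affineMap (AffineMap.lineMap b (b + c))
  have hline : ∀ s : ℝ, AffineMap.lineMap b (b + c) s = b + c * s := fun s => by
    rw [AffineMap.lineMap_apply_ring]
    ring
  simpa only [Function.comp_def, preimage, mem_Ioi, hline, zpow_neg, zpow_ofNat, one_div] using h

/-- The trigamma function `ψ₁`, that is, the Hurwitz zeta value `ζ(2, y)`, as a series. At a pole,
`y = 0, -1, -2, …`, the infinite term is `1 / 0 = 0`, so this is the sum of the other terms. -/
noncomputable def trigamma (y : ℝ) : ℝ := ∑' i : ℕ, 1 / (y + i) ^ 2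

section Trigamma

variable {M a x t y z : ℝ}

theorem summable_trigamma (y : ℝ) : Summable fun i : ℕ => 1 / (y + i) ^ 2 := by
  refine ((Real.summable_one_div_nat_add_rpow y 2).2 one_lt_two).congr fun i => ?_
  rw [Real.rpow_two, sq_abs, add_comm]

theorem trigamma_nonneg (y : ℝ) : 0 ≤ trigamma y := tsum_nonneg fun _ => by positivity

theorem trigamma_eq_one_div_sq_add (y : ℝ) : trigamma y = 1 / y ^ 2 + trigamma (y + 1) := by
  simp only [trigamma, (summable_trigamma y).tsum_eq_zero_add, Nat.cast_zero, add_zero,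
    Nat.cast_succ, add_assoc, add_comm (1 : ℝ)]

theorem sq_mul_trigamma (hy : y ≠ 0) : y ^ 2 * trigamma y = 1 + y ^ 2 * trigamma (y + 1) := by
  rw [trigamma_eq_one_div_sq_add, mul_add, mul_one_div_cancel (pow_ne_zero 2 hy)]

theorem tendsto_two_div_two_mul_sub_one :
    Tendsto (fun u : ℝ => 2 / (2 * u - 1)) atTop (𝓝 0) :=
  (tendsto_atTop_add_const_right _ (-1) (tendsto_id.const_mul_atTop two_pos)).const_div_atTop 2

theorem two_div_sub_two_div_succ {u : ℝ} (hu : 1 / 2 < u) :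
    2 / (2 * u - 1) - 2 / (2 * (u + 1) - 1) = 1 / u ^ 2 + 1 / (u ^ 2 * (4 * u ^ 2 - 1)) := by
  have h₀ : u ≠ 0 := by linarith
  have h₁ : 2 * u - 1 ≠ 0 := by linarith
  have h₂ : 2 * u + 1 ≠ 0 := by linarith
  rw [show 2 * (u + 1) - 1 = 2 * u + 1 by ring,
    show 4 * u ^ 2 - 1 = (2 * u - 1) * (2 * u + 1) by ring]
  field_simp
  ring

theorem one_div_le_trigamma (hy : 0 < y) : 1 / y ≤ trigamma y := by
  refine le_tsum_add_natCast (f := fun u => 1 / u ^ 2) (F := fun u => 1 / u)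
    (summable_trigamma y) (tendsto_id.const_div_atTop 1) fun u hu => ?_
  have hu₀ : 0 < u := hy.trans_le hu
  calc 1 / u - 1 / (u + 1) = 1 / (u * (u + 1)) := by field_simp; ring
    _ ≤ 1 / u ^ 2 := by gcongr; nlinarith

theorem trigamma_le_two_div (hy : 1 / 2 < y) : trigamma y ≤ 2 / (2 * y - 1) := by
  refine tsum_add_natCast_le (f := fun u => 1 / u ^ 2) (F := fun u => 2 / (2 * u - 1))
    (summable_trigamma y) tendsto_two_div_two_mul_sub_one fun u hu => ?_
  have h : 0 ≤ 4 * u ^ 2 - 1 := by nlinarith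
  rw [two_div_sub_two_div_succ (hy.trans_le hu)]
  exact le_add_of_nonneg_right (by positivity)

theorem trigamma_le_one_div_add_one_div_sq (hy : 0 < y) : trigamma y ≤ 1 / y + 1 / y ^ 2 := by
  have h : trigamma (y + 1) ≤ 1 / y :=
    calc trigamma (y + 1) ≤ 2 / (2 * (y + 1) - 1) := trigamma_le_two_div (by linarith)
      _ ≤ 1 / y := by
        rw [div_le_div_iff₀ (by linarith) hy]
        linarith
  rw [trigamma_eq_one_div_sq_add]
  linarith

theorem antitoneOn_trigamma_sub :
    AntitoneOn (fun y => trigamma y - (1 / y + 1 / (2 * y ^ 2))) (Ioi 0) := by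
  have hF : Tendsto (fun u : ℝ => 1 / u + 1 / (2 * u ^ 2)) atTop (𝓝 0) := by
    simpa only [add_zero, id] using (tendsto_id.const_div_atTop (1 : ℝ)).add
      (((tendsto_pow_atTop two_ne_zero).const_mul_atTop two_pos).const_div_atTop 1)
  have key : ∀ u : ℝ, 0 < u →
      1 / u ^ 2 - (1 / u + 1 / (2 * u ^ 2) - (1 / (u + 1) + 1 / (2 * (u + 1) ^ 2)))
        = 1 / (2 * u ^ 2 * (u + 1) ^ 2) := fun u hu => by
    field_simp
    ring
  refine antitoneOn_tsum_add_natCast_sub (f := fun u => 1 / u ^ 2)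
    (fun y _ => summable_trigamma y) hF fun u (hu : 0 < u) v hv huv => ?_
  simp only [key u hu, key v hv]
  gcongr

theorem monotoneOn_trigamma_sub :
    MonotoneOn (fun y => trigamma y - 2 / (2 * y - 1)) (Ioi (1 / 2)) := by
  refine monotoneOn_tsum_add_natCast_sub (f := fun u => 1 / u ^ 2)
    (fun y _ => summable_trigamma y) tendsto_two_div_two_mul_sub_one
    fun u (hu : 1 / 2 < u) v hv huv => ?_
  have h : 0 < 4 * u ^ 2 - 1 := by nlinarith
  simp only [two_div_sub_two_div_succ hu, two_div_sub_two_div_succ hv, sub_add_cancel_left,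
    neg_le_neg_iff]
  gcongr

theorem antitoneOn_mul_trigamma : AntitoneOn (fun y => y * trigamma y) (Ioi 0) := by
  intro y (hy : 0 < y) z (hz : 0 < z) hyz
  have h : (z - y) * trigamma z ≤ y * (trigamma y - trigamma z) :=
    calc (z - y) * trigamma z ≤ (z - y) * (1 / z + 1 / z ^ 2) :=
          mul_le_mul_of_nonneg_left (trigamma_le_one_div_add_one_div_sq hz) (sub_nonneg.2 hyz)
      _ ≤ (z - y) * (1 / z + 1 / z ^ 2) + (z - y) ^ 2 / (2 * y * z ^ 2) :=
          le_add_of_nonneg_right (by positivity)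
      _ = y * ((1 / y + 1 / (2 * y ^ 2)) - (1 / z + 1 / (2 * z ^ 2))) := by
          field_simp
          ring
      _ ≤ y * (trigamma y - trigamma z) :=
          mul_le_mul_of_nonneg_left (by linarith [antitoneOn_trigamma_sub hy hz hyz]) hy.le
  linarith

theorem monotoneOn_sub_one_mul_trigamma :
    MonotoneOn (fun y => (y - 1) * trigamma y) (Ici 1) := by
  intro y (hy : 1 ≤ y) z (hz : 1 ≤ z) hyz
  have hy₁ : 0 < 2 * y - 1 := by linarith
  have hz₁ : 0 < 2 * z - 1 := by linarith
  have hzy : 0 ≤ z - y := sub_nonneg.2 hyz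
  have hψ := monotoneOn_trigamma_sub (mem_Ioi.2 (by linarith)) (mem_Ioi.2 (by linarith)) hyz
  have h : (y - 1) * (trigamma y - trigamma z) ≤ (z - y) * trigamma z :=
    calc (y - 1) * (trigamma y - trigamma z)
        ≤ (y - 1) * (2 / (2 * y - 1) - 2 / (2 * z - 1)) :=
          mul_le_mul_of_nonneg_left (by linarith) (sub_nonneg.2 hy)
      _ = (z - y) * (4 * (y - 1) / ((2 * y - 1) * (2 * z - 1))) := by
          rw [div_sub_div _ _ hy₁.ne' hz₁.ne']
          ring
      _ ≤ (z - y) * (1 / z) := by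
          refine mul_le_mul_of_nonneg_left ?_ hzy
          rw [div_le_div_iff₀ (mul_pos hy₁ hz₁) (by linarith)]
          linarith
      _ ≤ (z - y) * trigamma z :=
          mul_le_mul_of_nonneg_left (one_div_le_trigamma (by linarith)) hzy
  linarith

theorem add_one_sq_mul_trigamma_le (hM : 0 < M) :
    (M + 1) ^ 2 * trigamma (M + 2) ≤ M ^ 2 * trigamma M := by
  have hψ : (2 * M + 1) * trigamma (M + 1) ≤ 2 := by
    have h := trigamma_le_two_div (y := M + 1) (by linarith)
    rw [show 2 * (M + 1) - 1 = 2 * M + 1 by ring, le_div_iff₀ (by linarith)] at h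
    linarith
  have h₁ := sq_mul_trigamma hM.ne'
  have h₂ := sq_mul_trigamma (y := M + 1) (by linarith)
  rw [add_assoc, one_add_one_eq_two] at h₂
  linarith

theorem convexOn_inv_sq_mul_trigamma (hM : 0 < M) :
    ConvexOn ℝ (Ioo 0 (2 / M)) fun s => s⁻¹ ^ 2 * trigamma (2 * s⁻¹ - M) := by
  simp only [trigamma, ← tsum_mul_left]
  refine convexOn_tsum (convex_Ioo _ _) (fun i => ?_) fun s _ =>
    (summable_trigamma _).mul_left _
  have hpos : Ioo 0 (2 / M) ⊆ {s | 0 < 2 + (i - M) * s} := fun s hs => by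
    have hMs : s * M < 2 := (lt_div_iff₀ hM).1 hs.2
    have his : 0 ≤ i * s := mul_nonneg i.cast_nonneg hs.1.le
    change 0 < 2 + (i - M) * s
    linarith
  refine ((convexOn_one_div_add_mul_sq 2 (i - M)).subset hpos (convex_Ioo _ _)).congr
    fun s hs => ?_
  have hs₀ : s ≠ 0 := hs.1.ne'
  calc 1 / (2 + (i - M) * s) ^ 2 = 1 / (s * (2 * s⁻¹ - M + i)) ^ 2 := by
        congr 2
        field_simp
        ring
    _ = s⁻¹ ^ 2 * (1 / (2 * s⁻¹ - M + i) ^ 2) := by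
        rw [mul_pow, one_div, one_div, mul_inv, inv_pow]

theorem sq_mul_trigamma_two_mul_sub_le (hM : 0 < M) (ha : a ∈ Icc M (M + 1)) :
    a ^ 2 * trigamma (2 * a - M) ≤ M ^ 2 * trigamma M := by
  have hmem : ∀ b ∈ Icc M (M + 1), b⁻¹ ∈ Ioo 0 (2 / M) := fun b hb => by
    have hb₀ : 0 < b := hM.trans_le hb.1
    refine ⟨inv_pos.2 hb₀, ?_⟩
    rw [inv_eq_one_div, div_lt_div_iff₀ hb₀ hM]
    linarith [hb.1]
  have h := (convexOn_inv_sq_mul_trigamma hM).le_max_of_mem_Icc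
    (hmem (M + 1) (right_mem_Icc.2 (by linarith))) (hmem M (left_mem_Icc.2 (by linarith)))
    ⟨inv_anti₀ (hM.trans_le ha.1) ha.2, inv_anti₀ hM ha.1⟩
  simp only [inv_inv] at h
  rw [show 2 * (M + 1) - M = M + 2 by ring, show 2 * M - M = M by ring,
    max_eq_right (add_one_sq_mul_trigamma_le hM)] at h
  exact h

theorem mul_trigamma_add_one_le (hM : 0 < M) (hx : x ∈ Icc 0 1) (ht : t ∈ Icc 0 1) :
    M * (M + 1) * trigamma (M + 1) ≤ (M + x) * (M + t) * trigamma (M + x + t) := by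
  have hx₀ := hx.1
  have ht₀ := ht.1
  have hψ := trigamma_nonneg (M + x + t)
  rcases le_total (x + t) 1 with h | h
  · calc M * (M + 1) * trigamma (M + 1)
        ≤ M * ((M + x + t) * trigamma (M + x + t)) := by
          rw [mul_assoc]
          exact mul_le_mul_of_nonneg_left (antitoneOn_mul_trigamma (mem_Ioi.2 (by linarith))
            (mem_Ioi.2 (by linarith)) (by linarith)) hM.le
      _ = (M * (M + x + t)) * trigamma (M + x + t) := by ring
      _ ≤ (M + x) * (M + t) * trigamma (M + x + t) := by
          refine mul_le_mul_of_nonneg_right ?_ hψ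
          linarith [mul_nonneg hx.1 ht.1]
  · calc M * (M + 1) * trigamma (M + 1)
        = (M + 1) * ((M + 1 - 1) * trigamma (M + 1)) := by ring
      _ ≤ (M + 1) * ((M + x + t - 1) * trigamma (M + x + t)) :=
          mul_le_mul_of_nonneg_left (monotoneOn_sub_one_mul_trigamma (mem_Ici.2 (by linarith))
            (mem_Ici.2 (by linarith)) (by linarith)) (by linarith)
      _ = ((M + 1) * (M + x + t - 1)) * trigamma (M + x + t) := by ring
      _ ≤ (M + x) * (M + t) * trigamma (M + x + t) := by
          refine mul_le_mul_of_nonneg_right ?_ hψ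
          linarith [mul_nonneg (sub_nonneg.2 hx.2) (sub_nonneg.2 ht.2)]

theorem mul_trigamma_le (hM : 0 < M) (hx : x ∈ Icc 0 1) (ht : t ∈ Icc 0 1) :
    (M + x) * (M + t) * trigamma (M + x + t) ≤ M ^ 2 * trigamma M := by
  have ha : M + (x + t) / 2 ∈ Icc M (M + 1) :=
    ⟨by linarith [hx.1, ht.1], by linarith [hx.2, ht.2]⟩
  calc (M + x) * (M + t) * trigamma (M + x + t)
      ≤ (M + (x + t) / 2) ^ 2 * trigamma (M + x + t) :=
        mul_le_mul_of_nonneg_right (by nlinarith [sq_nonneg (x - t)]) (trigamma_nonneg _)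
    _ = (M + (x + t) / 2) ^ 2 * trigamma (2 * (M + (x + t) / 2) - M) := by ring_nf
    _ ≤ M ^ 2 * trigamma M := sq_mul_trigamma_two_mul_sub_le hM ha

end Trigamma

theorem stmt15_general {N x t : ℝ} (hN : 1 < N) (hx : x ∈ Icc 0 1) (ht : t ∈ Icc 0 1) :
    1 + N ^ 2 * (∑' i : ℕ, 1 / ((i : ℝ) + N + 1) ^ 2) - N * (∑' i : ℕ, 1 / ((i : ℝ) + N) ^ 2)
      ≤ (x + N - 1) * (t + N - 1) * ∑' i : ℕ, 1 / (x + ((i : ℝ) + N) + t - 1) ^ 2 ∧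
    (x + N - 1) * (t + N - 1) * (∑' i : ℕ, 1 / (x + ((i : ℝ) + N) + t - 1) ^ 2)
      ≤ 1 + (N - 1) ^ 2 * ∑' i : ℕ, 1 / ((i : ℝ) + N) ^ 2 := by
  obtain ⟨M, rfl⟩ : ∃ M, N = M + 1 := ⟨N - 1, by ring⟩
  have hM : 0 < M := by linarith
  have h₁ : ∑' i : ℕ, 1 / ((i : ℝ) + (M + 1)) ^ 2 = trigamma (M + 1) :=
    tsum_congr fun i => by ring_nf
  have h₂ : ∑' i : ℕ, 1 / ((i : ℝ) + (M + 1) + 1) ^ 2 = trigamma (M + 1 + 1) :=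
    tsum_congr fun i => by ring_nf
  have h₃ : ∑' i : ℕ, 1 / (x + ((i : ℝ) + (M + 1)) + t - 1) ^ 2 = trigamma (M + x + t) :=
    tsum_congr fun i => by ring_nf
  have hl := mul_trigamma_add_one_le hM hx ht
  have hu := mul_trigamma_le hM hx ht
  rw [sq_mul_trigamma hM.ne'] at hu
  rw [h₁, h₂, h₃, ← sq_mul_trigamma (by linarith)]
  constructor <;> linarith

theorem stmt15 (N : ℕ) (hN : 2 ≤ N) (x t : ℝ)
    (hx : x ∈ Set.Icc (0 : ℝ) 1) (ht : t ∈ Set.Icc (0 : ℝ) 1) :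
    1 + (N : ℝ) ^ 2 * (∑' i : ℕ, 1 / ((i : ℝ) + (N : ℝ) + 1) ^ 2)
        - (N : ℝ) * (∑' i : ℕ, 1 / ((i : ℝ) + (N : ℝ)) ^ 2)
      ≤ (x + (N : ℝ) - 1) * (t + (N : ℝ) - 1)
          * ∑' i : ℕ, 1 / (x + ((i : ℝ) + (N : ℝ)) + t - 1) ^ 2 ∧
    (x + (N : ℝ) - 1) * (t + (N : ℝ) - 1)
        * (∑' i : ℕ, 1 / (x + ((i : ℝ) + (N : ℝ)) + t - 1) ^ 2)
      ≤ 1 + ((N : ℝ) - 1) ^ 2 * ∑' i : ℕ, 1 / ((i : ℝ) + (N : ℝ)) ^ 2 :=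
  stmt15_general (Nat.one_lt_cast.2 hN) hx ht
end

section
/- Fix an integer N ≥ 2 and n ≥ 1. Then ψ_{ρ_N}(n) = ε_{N,n}. In particular, since ε_{N,n} → 0 as n → ∞, the sequence of Rényi-type digits (a_n) is ψ-mixing under ρ_N. -/
open MeasureTheory Set Real Filter

/-- The Rényi-type continued fraction map `R_N`. -/
noncomputable def RN (N : ℕ) (x : ℝ) : ℝ :=
  if x = 1 then 0 else (N : ℝ) / (1 - x) - ⌊(N : ℝ) / (1 - x)⌋

/-- `digit N k x` is the `(k+1)`-st digit `a_{k+1}(x)`. -/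
noncomputable def digit (N k : ℕ) (x : ℝ) : ℤ :=
  ⌊(N : ℝ) / (1 - (RN N)^[k] x)⌋

/-- The conditional probability measure `ρ^t_N`, with density
`N(N-1+t)/[N-(1-x)(1-t)]²` on `[0,1]`. -/
noncomputable def rhoT (N : ℕ) (t : ℝ) : Measure ℝ :=
  (volume.restrict (Set.Icc (0 : ℝ) 1)).withDensity fun x =>
    ENNReal.ofReal ((N : ℝ) * ((N : ℝ) - 1 + t) / ((N : ℝ) - (1 - x) * (1 - t)) ^ 2)

/-- The invariant probability measure `ρ_N`, with density
`(log(N/(N-1)))⁻¹/(x+N-1)` on `[0,1]`. -/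
noncomputable def rhoN (N : ℕ) : Measure ℝ :=
  (volume.restrict (Set.Icc (0 : ℝ) 1)).withDensity fun x =>
    ENNReal.ofReal ((Real.log ((N : ℝ) / ((N : ℝ) - 1)))⁻¹ / (x + (N : ℝ) - 1))

/-- `ε_{N,n}`. -/
noncomputable def eps (N n : ℕ) : ℝ :=
  sSup {r : ℝ | ∃ t ∈ Set.Icc (0 : ℝ) 1, ∃ C : Set ℝ, MeasurableSet C ∧
    0 < (rhoN N ((RN N)^[n - 1] ⁻¹' C)).toReal ∧
    r = |(rhoT N t ((RN N)^[n - 1] ⁻¹' C)).toReal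
          / (rhoN N ((RN N)^[n - 1] ⁻¹' C)).toReal - 1|}

/-- The ψ-mixing coefficient `ψ_μ(n)` of the digit sequence under `μ`. -/
noncomputable def psi (N : ℕ) (μ : Measure ℝ) (n : ℕ) : ℝ :=
  sSup {r : ℝ | ∃ k : ℕ, 1 ≤ k ∧ ∃ A B : Set ℝ,
    (∃ S : Set (Fin k → ℤ),
      A = {y | y ∈ Set.Icc (0 : ℝ) 1 ∧ Irrational y ∧ (fun j : Fin k => digit N j y) ∈ S}) ∧
    (∃ C : Set ℝ, MeasurableSet C ∧ B = (RN N)^[k + n - 1] ⁻¹' C) ∧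
    (μ A).toReal * (μ B).toReal ≠ 0 ∧
    r = |(μ (A ∩ B)).toReal / ((μ A).toReal * (μ B).toReal) - 1|}

/-!
The inverse branches `u_i(y) = 1 - N / (N + i + y)` of `R_N` carry the family `ρ^t_N` to itself:
under `ρ^t_N`, the conditional law of `R_N` given that the first digit is `N + i` is
`ρ^{u_i(t)}_N`. By iteration (the Brodén–Borel–Lévy formula), the conditional law of `R_N^k` given
the first `k` digits is `ρ^s_N` for a point `s` depending on `t` and the digits. Moreover
`ρ_N = ∫ ρ^t_N dρ_N(t)`, so under `ρ_N` the law of `R_N^k` on a rank-`k` cylinder is a mixture of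
measures `ρ^s_N`. Averaging the bounds which define `ε_{N,n}` therefore gives `ψ(n) ≤ ε_{N,n}`.
Conversely the branches contract, so for every `s ∈ [0,1]` there are cylinders on which the points
occurring in this mixture are all arbitrarily close to `s`; since `ρ^s_N(C) / ρ_N(C)` is Lipschitz
in `s`, uniformly in `C`, this gives `ε_{N,n} ≤ ψ(n)`.

The function `s ↦ ρ^s_N(R_N^{-m}(C))` is the `m`-th image of `s ↦ ρ^s_N(C)` under the averaging
operator `g ↦ ∑ p_i(s) g(u_i(s))`. This operator contracts Lipschitz constants by the factor `3/4`:
moving `s` in `u_i(s)` costs `1/2`, and moving `s` in the weights costs `1/4` after an Abel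
summation, because the partial sums of the weights are `n / (N + n + s - 1)`. Hence
`ε_{N,n} → 0` geometrically.
-/

section Preliminaries

theorem abs_div_sub_one_le_iff {x y M : ℝ} (hy : 0 < y) :
    |x / y - 1| ≤ M ↔ |x - y| ≤ M * y := by
  rw [div_sub_one hy.ne', abs_div, abs_of_pos hy, div_le_iff₀ hy]

/-- Abel's inequality: here `r n` bounds the variation of `c` from the index `n` on. -/
theorem abs_sum_mul_le_of_abs_sum_le {c d r : ℕ → ℝ} {B : ℝ}
    (hd : ∀ n, |∑ i ∈ Finset.range n, d i| ≤ B) (hc : ∀ n, |c n| ≤ r n)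
    (hcr : ∀ n, |c (n + 1) - c n| ≤ r n - r (n + 1)) (n : ℕ) :
    |∑ i ∈ Finset.range n, c i * d i| ≤ r 0 * B := by
  have hr : ∀ n, 0 ≤ r n := fun n => (abs_nonneg _).trans (hc n)
  have hB : 0 ≤ B := (abs_nonneg _).trans (hd 0)
  obtain _ | n := n
  · simpa using mul_nonneg (hr 0) hB
  set D : ℕ → ℝ := fun n => ∑ i ∈ Finset.range n, d i
  have by_parts : ∑ i ∈ Finset.range (n + 1), c i * d i
      = c n * D (n + 1) - ∑ i ∈ Finset.range n, (c (i + 1) - c i) * D (i + 1) :=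
    Finset.sum_range_by_parts c d (n + 1)
  calc |∑ i ∈ Finset.range (n + 1), c i * d i|
      ≤ |c n| * |D (n + 1)| + ∑ i ∈ Finset.range n, |c (i + 1) - c i| * |D (i + 1)| := by
        rw [by_parts, ← abs_mul]
        simp_rw [← abs_mul]
        exact (abs_sub _ _).trans (add_le_add_right (Finset.abs_sum_le_sum_abs _ _) _)
    _ ≤ r n * B + ∑ i ∈ Finset.range n, (r i - r (i + 1)) * B := by
        gcongr with i
        · exact hr n
        · exact hc n
        · exact hd _
        · exact (abs_nonneg _).trans (hcr i)
        · exact hcr i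
        · exact hd _
    _ = r 0 * B := by
        rw [← Finset.sum_mul, Finset.sum_range_sub']
        ring

theorem lintegral_Icc_ofReal_eq_sub {f F : ℝ → ℝ} {a b : ℝ} (hab : a ≤ b)
    (hF : ∀ x ∈ Icc a b, HasDerivAt F (f x) x) (hf : ContinuousOn f (Icc a b))
    (hf0 : ∀ x ∈ Icc a b, 0 ≤ f x) :
    ∫⁻ x in Icc a b, ENNReal.ofReal (f x) = ENNReal.ofReal (F b - F a) := by
  rw [← uIcc_of_le hab] at hF
  rw [← ofReal_integral_eq_lintegral_ofReal (hf.integrableOn_compact isCompact_Icc)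
    (ae_restrict_of_forall_mem measurableSet_Icc hf0),
    integral_Icc_eq_integral_Ioc, ← intervalIntegral.integral_of_le hab,
    intervalIntegral.integral_eq_sub_of_hasDerivAt hF (hf.intervalIntegrable_of_Icc hab)]

variable {α : Type*} {mα : MeasurableSpace α} {μ : Measure α}

theorem measureReal_inter_congr_left {s t : Set α} (h : s =ᵐ[μ] t) (u : Set α) :
    μ.real (s ∩ u) = μ.real (t ∩ u) :=
  measureReal_congr (h.inter (ae_eq_refl u))

theorem abs_measureReal_iUnion_inter_sub_le [IsFiniteMeasure μ] {ι : Type*} [Countable ι]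
    {s : ι → Set α} (hs : ∀ i, MeasurableSet (s i)) (hdisj : Pairwise (Function.onFun Disjoint s))
    {E : Set α} (hE : MeasurableSet E) {a b : ℝ}
    (h : ∀ i, |μ.real (s i ∩ E) - a * μ.real (s i)| ≤ b * μ.real (s i)) :
    |μ.real ((⋃ i, s i) ∩ E) - a * μ.real (⋃ i, s i)| ≤ b * μ.real (⋃ i, s i) := by
  have hasSum_real : ∀ F, MeasurableSet F →
      HasSum (fun i => μ.real (s i ∩ F)) (μ.real ((⋃ i, s i) ∩ F)) := by
    intro F hF
    have h_sum : μ ((⋃ i, s i) ∩ F) = ∑' i, μ (s i ∩ F) := by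
      rw [iUnion_inter, measure_iUnion (fun i j hij => (hdisj hij).mono inter_subset_left
        inter_subset_left) fun i => (hs i).inter hF]
    rw [measureReal_def, h_sum, ENNReal.tsum_toReal_eq fun i => measure_ne_top _ _]
    exact ENNReal.hasSum_toReal (h_sum ▸ measure_ne_top _ _)
  have hasSum_univ : HasSum (fun i => μ.real (s i)) (μ.real (⋃ i, s i)) := by
    simpa only [inter_univ] using hasSum_real univ MeasurableSet.univ
  exact ((hasSum_real E hE).sub (hasSum_univ.mul_left a)).norm_le_of_bounded
    (hasSum_univ.mul_left b) h

theorem measureReal_withDensity_ofReal {f : α → ℝ} (hf : Integrable f μ) (hf0 : 0 ≤ᵐ[μ] f)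
    {s : Set α} (hs : MeasurableSet s) :
    (μ.withDensity fun x => ENNReal.ofReal (f x)).real s = ∫ x in s, f x ∂μ := by
  rw [measureReal_def, withDensity_apply _ hs,
    ← ofReal_integral_eq_lintegral_ofReal hf.integrableOn (ae_restrict_of_ae hf0),
    ENNReal.toReal_ofReal (integral_nonneg_of_ae (ae_restrict_of_ae hf0))]

theorem abs_measureReal_withDensity_sub_le {f g h : α → ℝ} (hf : Integrable f μ)
    (hf0 : 0 ≤ᵐ[μ] f) (hg : Integrable g μ) (hg0 : 0 ≤ᵐ[μ] g) (hh : Integrable h μ)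
    (hh0 : 0 ≤ᵐ[μ] h) {c : ℝ} (hfg : ∀ᵐ x ∂μ, |f x - g x| ≤ c * h x)
    {s : Set α} (hs : MeasurableSet s) :
    |(μ.withDensity fun x => ENNReal.ofReal (f x)).real s
        - (μ.withDensity fun x => ENNReal.ofReal (g x)).real s|
      ≤ c * (μ.withDensity fun x => ENNReal.ofReal (h x)).real s := by
  rw [measureReal_withDensity_ofReal hf hf0 hs, measureReal_withDensity_ofReal hg hg0 hs,
    measureReal_withDensity_ofReal hh hh0 hs, ← integral_sub hf.integrableOn hg.integrableOn,
    ← integral_const_mul]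
  exact norm_integral_le_of_norm_le (f := fun x => f x - g x) (hh.integrableOn.const_mul c)
    (ae_restrict_of_ae hfg)

end Preliminaries

section FirstDigit

variable (N : ℕ)

theorem measurable_digit_zero : Measurable (digit N 0) :=
  Int.measurable_floor.comp (by unfold Nat.iterate; fun_prop)

theorem measurable_RN : Measurable (RN N) := by
  refine Measurable.ite (measurableSet_singleton 1) measurable_const (Measurable.sub ?_ ?_)
  · fun_prop
  · exact measurable_from_top.comp (measurable_digit_zero N)

theorem measurableSet_preimage_RN_iterate (k : ℕ) {E : Set ℝ} (hE : MeasurableSet E) :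
    MeasurableSet ((RN N)^[k] ⁻¹' E) :=
  (measurable_RN N).iterate k hE

theorem RN_mem_Ico (x : ℝ) : RN N x ∈ Ico (0 : ℝ) 1 := by
  unfold RN
  split_ifs
  · exact ⟨le_rfl, one_pos⟩
  · exact ⟨Int.fract_nonneg _, Int.fract_lt_one _⟩

/-- The set of points whose first digit is `N + i`. -/
def firstDigitSet (i : ℕ) : Set ℝ := {x | digit N 0 x = N + i}

theorem measurableSet_firstDigitSet (i : ℕ) : MeasurableSet (firstDigitSet N i) :=
  measurable_digit_zero N (measurableSet_singleton _)

theorem pairwise_disjoint_firstDigitSet : Pairwise (Function.onFun Disjoint (firstDigitSet N)) := by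
  refine fun i j hij => Set.disjoint_left.2 fun x hi hj => hij ?_
  simpa using hi.symm.trans hj

variable {N}

theorem exists_mem_firstDigitSet {x : ℝ} (hx : x ∈ Ico (0 : ℝ) 1) : ∃ i, x ∈ firstDigitSet N i := by
  have h_le : (N : ℤ) ≤ ⌊(N : ℝ) / (1 - x)⌋ := by
    rw [Int.le_floor, Int.cast_natCast, le_div_iff₀ (sub_pos.2 hx.2)]
    exact mul_le_of_le_one_right N.cast_nonneg (by linarith [hx.1])
  obtain ⟨i, hi⟩ := Int.le.dest h_le
  exact ⟨i, hi.symm⟩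

theorem RN_of_mem_firstDigitSet {i : ℕ} {x : ℝ} (hx : x ≠ 1) (hi : x ∈ firstDigitSet N i) :
    RN N x = N / (1 - x) - (N + i) := by
  have h_floor : ⌊(N : ℝ) / (1 - x)⌋ = (N : ℤ) + i := hi
  rw [RN, if_neg hx, h_floor]
  push_cast
  rfl

end FirstDigit

section InverseBranches

variable {N : ℕ} [N.AtLeastTwo]

/-- The inverse branch `u_i` of `R_N` whose values have first digit `N + i`. -/
noncomputable def inverseBranch (N i : ℕ) (y : ℝ) : ℝ := 1 - N / (N + i + y)

variable (N) in
theorem two_le_cast : (2 : ℝ) ≤ N := Nat.ofNat_le_cast.2 Nat.AtLeastTwo.prop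

variable (N) in
theorem one_lt_branch_denom (i : ℕ) {y : ℝ} (hy : 0 ≤ y) : 1 < (N : ℝ) + i + y := by
  linarith [two_le_cast N, Nat.cast_nonneg (α := ℝ) i]

theorem inverseBranch_mem_Ico (i : ℕ) {y : ℝ} (hy : 0 ≤ y) :
    inverseBranch N i y ∈ Ico (0 : ℝ) 1 := by
  have h_denom := one_pos.trans (one_lt_branch_denom N i hy)
  have h_le : (N : ℝ) / (N + i + y) ≤ 1 := (div_le_one h_denom).2 (by linarith)
  have h_pos : (0 : ℝ) < N / (N + i + y) := div_pos (by linarith [two_le_cast N]) h_denom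
  constructor <;> unfold inverseBranch <;> linarith

theorem inverseBranch_mem_Icc (i : ℕ) {y : ℝ} (hy : y ∈ Icc (0 : ℝ) 1) :
    inverseBranch N i y ∈ Icc (0 : ℝ) 1 :=
  Ico_subset_Icc_self (inverseBranch_mem_Ico i hy.1)

theorem div_one_sub_inverseBranch (i : ℕ) (y : ℝ) :
    (N : ℝ) / (1 - inverseBranch N i y) = N + i + y := by
  rw [inverseBranch, sub_sub_cancel, div_div_cancel₀ (by linarith [two_le_cast N])]

theorem inverseBranch_mem_firstDigitSet (i : ℕ) {y : ℝ} (hy : y ∈ Ico (0 : ℝ) 1) :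
    inverseBranch N i y ∈ firstDigitSet N i := by
  change ⌊(N : ℝ) / (1 - inverseBranch N i y)⌋ = (N : ℤ) + i
  rw [div_one_sub_inverseBranch, Int.floor_eq_iff]
  push_cast
  constructor <;> linarith [hy.1, hy.2]

theorem RN_inverseBranch (i : ℕ) {y : ℝ} (hy : y ∈ Ico (0 : ℝ) 1) :
    RN N (inverseBranch N i y) = y := by
  rw [RN_of_mem_firstDigitSet (inverseBranch_mem_Ico i hy.1).2.ne
    (inverseBranch_mem_firstDigitSet i hy), div_one_sub_inverseBranch, add_sub_cancel_left]

theorem inverseBranch_RN {i : ℕ} {x : ℝ} (hx : x ≠ 1) (hi : x ∈ firstDigitSet N i) :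
    inverseBranch N i (RN N x) = x := by
  rw [RN_of_mem_firstDigitSet hx hi, inverseBranch, add_sub_cancel,
    div_div_cancel₀ (by linarith [two_le_cast N]), sub_sub_cancel]

theorem one_notMem_firstDigitSet (i : ℕ) : (1 : ℝ) ∉ firstDigitSet N i := by
  intro h
  have h_floor : ⌊(N : ℝ) / (1 - 1)⌋ = (N : ℤ) + i := h
  have := Nat.AtLeastTwo.prop (n := N)
  simp only [sub_self, div_zero, Int.floor_zero] at h_floor
  omega

theorem image_inverseBranch (i : ℕ) (E : Set ℝ) :
    inverseBranch N i '' (Ico 0 1 ∩ E) = Icc 0 1 ∩ (firstDigitSet N i ∩ RN N ⁻¹' E) := by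
  refine Subset.antisymm (image_subset_iff.2 ?_) ?_
  · rintro y ⟨hy, hyE⟩
    refine ⟨inverseBranch_mem_Icc i (Ico_subset_Icc_self hy),
      inverseBranch_mem_firstDigitSet i hy, ?_⟩
    rwa [mem_preimage, RN_inverseBranch i hy]
  · rintro x ⟨-, hi, hxE⟩
    have hx_ne : x ≠ 1 := fun h => one_notMem_firstDigitSet i (h ▸ hi)
    exact ⟨RN N x, ⟨RN_mem_Ico N x, hxE⟩, inverseBranch_RN hx_ne hi⟩

theorem injOn_inverseBranch (i : ℕ) : InjOn (inverseBranch N i) (Ico 0 1) :=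
  LeftInvOn.injOn (f₁' := RN N) fun _ => RN_inverseBranch i

theorem hasDerivAt_inverseBranch (i : ℕ) {y : ℝ} (hy : 0 ≤ y) :
    HasDerivAt (inverseBranch N i) (N / (N + i + y) ^ 2) y := by
  have h_ne : (N : ℝ) + i + y ≠ 0 := (one_pos.trans (one_lt_branch_denom N i hy)).ne'
  refine (((((hasDerivAt_id y).const_add ((N : ℝ) + i)).fun_inv h_ne).const_mul
    (N : ℝ)).const_sub 1).congr_deriv ?_
  simp only [id]
  ring

theorem inverseBranch_sub (i : ℕ) {s t : ℝ} (hs : 0 ≤ s) (ht : 0 ≤ t) :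
    inverseBranch N i s - inverseBranch N i t = N * (s - t) / ((N + i + s) * (N + i + t)) := by
  have hs_ne := (one_pos.trans (one_lt_branch_denom N i hs)).ne'
  have ht_ne := (one_pos.trans (one_lt_branch_denom N i ht)).ne'
  unfold inverseBranch
  field_simp
  ring

theorem abs_inverseBranch_sub_le (i : ℕ) {s t : ℝ} (hs : 0 ≤ s) (ht : 0 ≤ t) :
    |inverseBranch N i s - inverseBranch N i t| ≤ 1 / 2 * |s - t| := by
  have h_two := two_le_cast N
  have : (0 : ℝ) ≤ i := i.cast_nonneg
  have h_denom : 2 * (N : ℝ) ≤ (N + i + s) * (N + i + t) :=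
    mul_le_mul (by linarith) (by linarith) (by linarith) (by linarith)
  have h_pos : (0 : ℝ) < (N + i + s) * (N + i + t) := by linarith
  rw [inverseBranch_sub i hs ht, abs_div, abs_mul, Nat.abs_cast, abs_of_pos h_pos,
    div_le_iff₀ h_pos]
  nlinarith [abs_nonneg (s - t)]

theorem setLIntegral_firstDigitSet (i : ℕ) {E : Set ℝ} (hE : MeasurableSet E) (g : ℝ → ENNReal) :
    ∫⁻ x in Icc 0 1 ∩ (firstDigitSet N i ∩ RN N ⁻¹' E), g x
      = ∫⁻ y in Icc 0 1 ∩ E, ENNReal.ofReal (N / (N + i + y) ^ 2) * g (inverseBranch N i y) := by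
  have h_ae : (Ico 0 1 ∩ E : Set ℝ) =ᵐ[volume] (Icc 0 1 ∩ E : Set ℝ) :=
    Ico_ae_eq_Icc.inter (ae_eq_refl E)
  rw [← image_inverseBranch, lintegral_image_eq_lintegral_abs_deriv_mul (measurableSet_Ico.inter hE)
    (fun y hy => (hasDerivAt_inverseBranch i hy.1.1).hasDerivWithinAt)
    ((injOn_inverseBranch i).mono inter_subset_left), Measure.restrict_congr_set h_ae]
  refine setLIntegral_congr_fun (measurableSet_Icc.inter hE) fun y _ => ?_
  rw [abs_of_nonneg (div_nonneg N.cast_nonneg (sq_nonneg _))]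

end InverseBranches

section Densities

variable {N : ℕ}

/-- The density of `ρ^t_N` with respect to Lebesgue measure on `[0,1]`. -/
noncomputable def condDensity (N : ℕ) (t x : ℝ) : ℝ :=
  N * (N - 1 + t) / (N - (1 - x) * (1 - t)) ^ 2

/-- The density of `ρ_N` with respect to Lebesgue measure on `[0,1]`. -/
noncomputable def invDensity (N : ℕ) (x : ℝ) : ℝ :=
  (log (N / (N - 1)))⁻¹ / (x + N - 1)

/-- The probability of the first digit `N + i` under `ρ^t_N`. -/
noncomputable def digitWeight (N i : ℕ) (t : ℝ) : ℝ :=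
  (N - 1 + t) / ((N + i + t) * (N + i + t - 1))

theorem measurable_condDensity (t : ℝ) : Measurable (condDensity N t) := by
  unfold condDensity
  fun_prop

theorem measurable_condDensity_uncurry : Measurable fun p : ℝ × ℝ => condDensity N p.1 p.2 := by
  unfold condDensity
  fun_prop

theorem measurable_invDensity : Measurable (invDensity N) := by
  unfold invDensity
  fun_prop

theorem measurable_digitWeight (i : ℕ) : Measurable (digitWeight N i) := by
  unfold digitWeight
  fun_prop

theorem rhoT_apply (t : ℝ) {E : Set ℝ} (hE : MeasurableSet E) :
    rhoT N t E = ∫⁻ x in Icc 0 1 ∩ E, ENNReal.ofReal (condDensity N t x) := by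
  rw [rhoT, withDensity_apply _ hE, Measure.restrict_restrict hE, inter_comm]
  rfl

theorem rhoN_apply {E : Set ℝ} (hE : MeasurableSet E) :
    rhoN N E = ∫⁻ x in Icc 0 1 ∩ E, ENNReal.ofReal (invDensity N x) := by
  rw [rhoN, withDensity_apply _ hE, Measure.restrict_restrict hE, inter_comm]
  rfl

theorem measurable_rhoT {E : Set ℝ} (hE : MeasurableSet E) : Measurable fun t => rhoT N t E := by
  simp_rw [rhoT_apply _ hE]
  exact Measurable.lintegral_prod_right' measurable_condDensity_uncurry.ennreal_ofReal

variable [N.AtLeastTwo]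

theorem one_le_condDensity_denom {t x : ℝ} (ht : t ∈ Icc (0 : ℝ) 1) (hx : x ∈ Icc (0 : ℝ) 1) :
    (1 : ℝ) ≤ N - (1 - x) * (1 - t) := by
  have h_le : (1 - x) * (1 - t) ≤ 1 :=
    mul_le_one₀ (by linarith [hx.1]) (by linarith [ht.2]) (by linarith [ht.1])
  linarith [two_le_cast N]

theorem condDensity_nonneg {t : ℝ} (ht : 0 ≤ t) (x : ℝ) : 0 ≤ condDensity N t x :=
  div_nonneg (mul_nonneg N.cast_nonneg (by linarith [two_le_cast N])) (sq_nonneg _)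

variable (N) in
theorem log_div_sub_one_pos : 0 < log ((N : ℝ) / (N - 1)) := by
  have h_two := two_le_cast N
  exact log_pos ((one_lt_div (by linarith)).2 (by linarith))

theorem invDensity_pos {x : ℝ} (hx : 0 ≤ x) : 0 < invDensity N x :=
  div_pos (inv_pos.2 (log_div_sub_one_pos N)) (by linarith [two_le_cast N])

theorem digitWeight_pos (i : ℕ) {t : ℝ} (ht : 0 ≤ t) : 0 < digitWeight N i t := by
  have h_denom := one_lt_branch_denom N i ht
  exact div_pos (by linarith [two_le_cast N]) (mul_pos (by linarith) (by linarith))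

theorem continuousOn_condDensity {t : ℝ} (ht : t ∈ Icc (0 : ℝ) 1) :
    ContinuousOn (condDensity N t) (Icc 0 1) := by
  refine ContinuousOn.div (by fun_prop) (by fun_prop) fun x hx => ?_
  have := one_le_condDensity_denom (N := N) ht hx
  positivity

theorem continuousOn_invDensity : ContinuousOn (invDensity N) (Icc 0 1) :=
  ContinuousOn.div (by fun_prop) (by fun_prop) fun x hx => by linarith [two_le_cast N, hx.1]

theorem integrable_condDensity {t : ℝ} (ht : t ∈ Icc (0 : ℝ) 1) :
    Integrable (condDensity N t) (volume.restrict (Icc 0 1)) :=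
  (continuousOn_condDensity ht).integrableOn_compact isCompact_Icc

theorem integrable_invDensity : Integrable (invDensity N) (volume.restrict (Icc 0 1)) :=
  continuousOn_invDensity.integrableOn_compact isCompact_Icc

theorem hasDerivAt_condDensity_primitive {t x : ℝ} (ht : t ∈ Icc (0 : ℝ) 1)
    (hx : x ∈ Icc (0 : ℝ) 1) :
    HasDerivAt (fun x : ℝ => N * x / (N - (1 - x) * (1 - t))) (condDensity N t x) x := by
  have h_ne : (N : ℝ) - (1 - x) * (1 - t) ≠ 0 :=
    (one_pos.trans_le (one_le_condDensity_denom ht hx)).ne'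
  refine (((hasDerivAt_id x).const_mul (N : ℝ)).fun_div
    ((((hasDerivAt_id x).const_sub 1).mul_const (1 - t)).const_sub (N : ℝ)) h_ne).congr_deriv ?_
  simp only [id, condDensity]
  ring

theorem hasDerivAt_invDensity_primitive {x : ℝ} (hx : 0 ≤ x) :
    HasDerivAt (fun x => (log ((N : ℝ) / (N - 1)))⁻¹ * log (x + N - 1)) (invDensity N x) x := by
  have h_ne : x + (N : ℝ) - 1 ≠ 0 := by linarith [two_le_cast N]
  refine (((((hasDerivAt_id x).add_const (N : ℝ)).sub_const 1).log h_ne).const_mul _).congr_deriv ?_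
  rw [invDensity, div_eq_mul_inv, one_div]
  rfl

theorem isProbabilityMeasure_rhoT {t : ℝ} (ht : t ∈ Icc (0 : ℝ) 1) :
    IsProbabilityMeasure (rhoT N t) := by
  have h_ne : (N : ℝ) ≠ 0 := by linarith [two_le_cast N]
  constructor
  rw [rhoT_apply t MeasurableSet.univ, inter_univ, lintegral_Icc_ofReal_eq_sub zero_le_one
    (fun x hx => hasDerivAt_condDensity_primitive ht hx) (continuousOn_condDensity ht)
    fun x _ => condDensity_nonneg ht.1 x]
  simp [h_ne]

instance isProbabilityMeasure_rhoN : IsProbabilityMeasure (rhoN N) := by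
  have h_two := two_le_cast N
  have h_log : log ((N : ℝ) / (N - 1)) = log N - log (N - 1) :=
    log_div (by linarith) (by linarith)
  constructor
  rw [rhoN_apply MeasurableSet.univ, inter_univ, lintegral_Icc_ofReal_eq_sub zero_le_one
    (fun x hx => hasDerivAt_invDensity_primitive hx.1) continuousOn_invDensity
    fun x hx => (invDensity_pos hx.1).le]
  rw [add_sub_cancel_left, zero_add, ← mul_sub, ← h_log,
    inv_mul_cancel₀ (log_div_sub_one_pos N).ne', ENNReal.ofReal_one]

theorem deriv_inverseBranch_mul_condDensity (i : ℕ) {t y : ℝ} (ht : 0 ≤ t) (hy : 0 ≤ y) :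
    (N : ℝ) / (N + i + y) ^ 2 * condDensity N t (inverseBranch N i y)
      = digitWeight N i t * condDensity N (inverseBranch N i t) y := by
  have h_two := two_le_cast N
  have ht_denom := one_lt_branch_denom N i ht
  have := one_lt_branch_denom N i hy
  have denom_left : (N : ℝ) - (1 - inverseBranch N i y) * (1 - t)
      = N * (N + i + t + y - 1) / (N + i + y) := by
    unfold inverseBranch
    field_simp
    ring
  have denom_right : (N : ℝ) - (1 - y) * (1 - inverseBranch N i t)
      = N * (N + i + t + y - 1) / (N + i + t) := by
    unfold inverseBranch
    field_simp
    ring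
  have numer_right : (N : ℝ) - 1 + inverseBranch N i t = N * (N + i + t - 1) / (N + i + t) := by
    unfold inverseBranch
    field_simp
    ring
  have h_pos : (0 : ℝ) < N + i + t - 1 := sub_pos.2 ht_denom
  unfold condDensity digitWeight
  rw [denom_left, denom_right, numer_right]
  field_simp

theorem deriv_inverseBranch_mul_invDensity (i : ℕ) {y : ℝ} (hy : 0 ≤ y) :
    (N : ℝ) / (N + i + y) ^ 2 * invDensity N (inverseBranch N i y)
      = digitWeight N i y * invDensity N y := by
  have h_two := two_le_cast N
  have h_denom := one_lt_branch_denom N i hy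
  have h_branch : inverseBranch N i y + (N : ℝ) - 1 = N * (N + i + y - 1) / (N + i + y) := by
    unfold inverseBranch
    field_simp
    ring
  have h_pos : (0 : ℝ) < N + i + y - 1 := sub_pos.2 h_denom
  have h_numer : (N : ℝ) - 1 + y ≠ 0 := by linarith
  unfold invDensity digitWeight
  rw [h_branch, show y + (N : ℝ) - 1 = N - 1 + y by ring]
  field_simp

theorem invDensity_mul_condDensity_comm {t x : ℝ} (ht : 0 ≤ t) (hx : 0 ≤ x) :
    invDensity N t * condDensity N t x = invDensity N x * condDensity N x t := by
  have h_two := two_le_cast N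
  have ht_ne : (N : ℝ) - 1 + t ≠ 0 := by linarith
  have hx_ne : (N : ℝ) - 1 + x ≠ 0 := by linarith
  unfold invDensity condDensity
  rw [mul_comm (1 - t), show x + (N : ℝ) - 1 = N - 1 + x by ring,
    show t + (N : ℝ) - 1 = N - 1 + t by ring]
  field_simp

end Densities

section Measures

variable {N : ℕ}

variable (N) in
theorem rhoT_absolutelyContinuous_volume (t : ℝ) : rhoT N t ≪ volume.restrict (Icc (0 : ℝ) 1) :=
  withDensity_absolutelyContinuous _ _

variable (N) in
theorem rhoN_absolutelyContinuous_volume : rhoN N ≪ volume.restrict (Icc (0 : ℝ) 1) :=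
  withDensity_absolutelyContinuous _ _

theorem ae_mem_Ico_and_irrational {P : Measure ℝ} (hP : P ≪ volume.restrict (Icc (0 : ℝ) 1)) :
    ∀ᵐ x ∂P, x ∈ Ico (0 : ℝ) 1 ∧ Irrational x := by
  have h_irrational : ∀ᵐ x : ℝ, Irrational x := (countable_range _).ae_notMem volume
  refine hP.ae_le ?_
  filter_upwards [ae_restrict_mem measurableSet_Icc, ae_restrict_of_ae h_irrational] with x hx hirr
  exact ⟨⟨hx.1, hx.2.lt_of_ne hirr.ne_one⟩, hirr⟩

theorem tsum_measure_firstDigitSet_inter {P : Measure ℝ}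
    (hP : P ≪ volume.restrict (Icc (0 : ℝ) 1)) {E : Set ℝ} (hE : MeasurableSet E) :
    ∑' i, P (firstDigitSet N i ∩ E) = P E := by
  have h_restrict : P.restrict (⋃ i, firstDigitSet N i) = P := by
    refine Measure.restrict_eq_self_of_ae_mem ?_
    filter_upwards [ae_mem_Ico_and_irrational hP] with x hx
    exact mem_iUnion.2 (exists_mem_firstDigitSet hx.1)
  conv_rhs => rw [← h_restrict, Measure.restrict_iUnion (pairwise_disjoint_firstDigitSet N)
    (measurableSet_firstDigitSet N), Measure.sum_apply _ hE]
  simp_rw [Measure.restrict_apply hE, inter_comm]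

variable [N.AtLeastTwo]

theorem volume_absolutelyContinuous_rhoN : volume.restrict (Icc (0 : ℝ) 1) ≪ rhoN N := by
  refine withDensity_absolutelyContinuous' measurable_invDensity.ennreal_ofReal.aemeasurable ?_
  filter_upwards [ae_restrict_mem measurableSet_Icc] with x hx
  exact (ENNReal.ofReal_pos.2 (invDensity_pos hx.1)).ne'

theorem rhoT_firstDigitSet_inter_preimage (i : ℕ) {t : ℝ} (ht : 0 ≤ t) {E : Set ℝ}
    (hE : MeasurableSet E) :
    rhoT N t (firstDigitSet N i ∩ RN N ⁻¹' E)
      = ENNReal.ofReal (digitWeight N i t) * rhoT N (inverseBranch N i t) E := by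
  rw [rhoT_apply t ((measurableSet_firstDigitSet N i).inter (measurable_RN N hE)),
    setLIntegral_firstDigitSet i hE, rhoT_apply _ hE,
    ← lintegral_const_mul _ (measurable_condDensity _).ennreal_ofReal]
  refine setLIntegral_congr_fun (measurableSet_Icc.inter hE) fun y hy => ?_
  rw [← ENNReal.ofReal_mul (by positivity), ← ENNReal.ofReal_mul (digitWeight_pos i ht).le,
    deriv_inverseBranch_mul_condDensity i ht hy.1.1]

theorem hasSum_digitWeight_mul_rhoT {t : ℝ} (ht : t ∈ Icc (0 : ℝ) 1) {E : Set ℝ}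
    (hE : MeasurableSet E) :
    HasSum (fun i => digitWeight N i t * (rhoT N (inverseBranch N i t)).real E)
      ((rhoT N t).real (RN N ⁻¹' E)) := by
  have := isProbabilityMeasure_rhoT (N := N) ht
  have h_tsum := tsum_measure_firstDigitSet_inter (N := N) (rhoT_absolutelyContinuous_volume N t)
    (measurable_RN N hE)
  have h_sum := ENNReal.hasSum_toReal (h_tsum ▸ measure_ne_top _ _)
  rw [← ENNReal.tsum_toReal_eq fun i => measure_ne_top _ _, h_tsum] at h_sum
  simpa only [measureReal_def, rhoT_firstDigitSet_inter_preimage _ ht.1 hE, ENNReal.toReal_mul,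
    ENNReal.toReal_ofReal (digitWeight_pos _ ht.1).le] using h_sum

theorem hasSum_digitWeight {t : ℝ} (ht : t ∈ Icc (0 : ℝ) 1) :
    HasSum (fun i => digitWeight N i t) 1 := by
  have h_sum := hasSum_digitWeight_mul_rhoT (N := N) ht MeasurableSet.univ
  have h_univ {s : ℝ} (hs : s ∈ Icc (0 : ℝ) 1) : (rhoT N s).real univ = 1 :=
    haveI := isProbabilityMeasure_rhoT (N := N) hs
    probReal_univ
  simpa only [preimage_univ, h_univ ht, h_univ (inverseBranch_mem_Icc _ ht), mul_one] using h_sum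

theorem rhoN_firstDigitSet_inter_preimage (i : ℕ) {E : Set ℝ} (hE : MeasurableSet E) :
    rhoN N (firstDigitSet N i ∩ RN N ⁻¹' E)
      = ∫⁻ y in Icc 0 1 ∩ E,
          ENNReal.ofReal (digitWeight N i y) * ENNReal.ofReal (invDensity N y) := by
  rw [rhoN_apply ((measurableSet_firstDigitSet N i).inter (measurable_RN N hE)),
    setLIntegral_firstDigitSet i hE]
  refine setLIntegral_congr_fun (measurableSet_Icc.inter hE) fun y hy => ?_
  rw [← ENNReal.ofReal_mul (by positivity), ← ENNReal.ofReal_mul (digitWeight_pos i hy.1.1).le,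
    deriv_inverseBranch_mul_invDensity i hy.1.1]

theorem measurePreserving_RN : MeasurePreserving (RN N) (rhoN N) (rhoN N) := by
  refine ⟨measurable_RN N, Measure.ext fun E hE => ?_⟩
  rw [Measure.map_apply (measurable_RN N) hE, ← tsum_measure_firstDigitSet_inter (N := N)
    (rhoN_absolutelyContinuous_volume N) (measurable_RN N hE)]
  simp_rw [rhoN_firstDigitSet_inter_preimage _ hE]
  rw [← lintegral_tsum fun i => by
    exact ((measurable_digitWeight i).ennreal_ofReal.mul
      measurable_invDensity.ennreal_ofReal).aemeasurable, rhoN_apply hE]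
  refine setLIntegral_congr_fun (measurableSet_Icc.inter hE) fun y hy => ?_
  have h_weights := hasSum_digitWeight (N := N) hy.1
  rw [ENNReal.tsum_mul_right, ← ENNReal.ofReal_tsum_of_nonneg
    (fun i => (digitWeight_pos i hy.1.1).le) h_weights.summable, h_weights.tsum_eq,
    ENNReal.ofReal_one, one_mul]

theorem measureReal_preimage_RN_iterate (k : ℕ) {E : Set ℝ} (hE : MeasurableSet E) :
    (rhoN N).real ((RN N)^[k] ⁻¹' E) = (rhoN N).real E :=
  (measurePreserving_RN.iterate k).measureReal_preimage hE.nullMeasurableSet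

theorem lintegral_invDensity_mul_condDensity {x : ℝ} (hx : x ∈ Icc (0 : ℝ) 1) :
    ∫⁻ t in Icc (0 : ℝ) 1, ENNReal.ofReal (invDensity N t) * ENNReal.ofReal (condDensity N t x)
      = ENNReal.ofReal (invDensity N x) := by
  have := isProbabilityMeasure_rhoT (N := N) hx
  calc ∫⁻ t in Icc (0 : ℝ) 1, ENNReal.ofReal (invDensity N t) * ENNReal.ofReal (condDensity N t x)
      = ∫⁻ t in Icc (0 : ℝ) 1,
          ENNReal.ofReal (invDensity N x) * ENNReal.ofReal (condDensity N x t) := by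
        refine setLIntegral_congr_fun measurableSet_Icc fun t ht => ?_
        rw [← ENNReal.ofReal_mul (invDensity_pos ht.1).le,
          ← ENNReal.ofReal_mul (invDensity_pos hx.1).le, invDensity_mul_condDensity_comm ht.1 hx.1]
    _ = ENNReal.ofReal (invDensity N x) * rhoT N x univ := by
        rw [lintegral_const_mul _ (measurable_condDensity x).ennreal_ofReal,
          rhoT_apply x MeasurableSet.univ, inter_univ]
    _ = ENNReal.ofReal (invDensity N x) := by rw [measure_univ, mul_one]

theorem rhoN_eq_lintegral_rhoT {E : Set ℝ} (hE : MeasurableSet E) :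
    rhoN N E = ∫⁻ t, rhoT N t E ∂rhoN N := by
  calc rhoN N E
      = ∫⁻ x in Icc 0 1 ∩ E, ∫⁻ t in Icc (0 : ℝ) 1,
          ENNReal.ofReal (invDensity N t) * ENNReal.ofReal (condDensity N t x) := by
        rw [rhoN_apply hE]
        exact setLIntegral_congr_fun (measurableSet_Icc.inter hE) fun x hx =>
          (lintegral_invDensity_mul_condDensity hx.1).symm
    _ = ∫⁻ t in Icc (0 : ℝ) 1, ENNReal.ofReal (invDensity N t) * rhoT N t E := by
        rw [lintegral_lintegral_swap ((measurable_invDensity.comp measurable_snd).ennreal_ofReal.mul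
          (measurable_condDensity_uncurry.comp measurable_swap).ennreal_ofReal).aemeasurable]
        simp_rw [lintegral_const_mul _ (measurable_condDensity _).ennreal_ofReal, rhoT_apply _ hE]
    _ = ∫⁻ t, rhoT N t E ∂rhoN N :=
        (lintegral_withDensity_eq_lintegral_mul _ measurable_invDensity.ennreal_ofReal
          (measurable_rhoT hE)).symm

theorem ae_isProbabilityMeasure_rhoT : ∀ᵐ t ∂rhoN N, IsProbabilityMeasure (rhoT N t) := by
  filter_upwards [ae_mem_Ico_and_irrational (rhoN_absolutelyContinuous_volume N)] with t ht
  exact isProbabilityMeasure_rhoT (Ico_subset_Icc_self ht.1)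

theorem integrable_measureReal_rhoT {E : Set ℝ} (hE : MeasurableSet E) :
    Integrable (fun t => (rhoT N t).real E) (rhoN N) := by
  refine Integrable.of_bound (measurable_rhoT hE).ennreal_toReal.aestronglyMeasurable 1 ?_
  filter_upwards [ae_isProbabilityMeasure_rhoT] with t _
  simpa only [norm_of_nonneg measureReal_nonneg] using measureReal_le_one

theorem measureReal_rhoN_eq_integral_rhoT {E : Set ℝ} (hE : MeasurableSet E) :
    (rhoN N).real E = ∫ t, (rhoT N t).real E ∂rhoN N := by
  rw [measureReal_def, rhoN_eq_lintegral_rhoT hE]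
  refine (integral_toReal (measurable_rhoT hE).aemeasurable ?_).symm
  filter_upwards [ae_isProbabilityMeasure_rhoT] with t _
  exact measure_lt_top _ _

theorem abs_measureReal_rhoN_sub_le {E F : Set ℝ} (hE : MeasurableSet E) (hF : MeasurableSet F)
    {a b : ℝ} (h : ∀ t ∈ Icc (0 : ℝ) 1,
      |(rhoT N t).real E - a * (rhoT N t).real F| ≤ b * (rhoT N t).real F) :
    |(rhoN N).real E - a * (rhoN N).real F| ≤ b * (rhoN N).real F := by
  have hE_int := integrable_measureReal_rhoT (N := N) hE
  have hF_int := integrable_measureReal_rhoT (N := N) hF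
  simp only [measureReal_rhoN_eq_integral_rhoT hE, measureReal_rhoN_eq_integral_rhoT hF,
    ← integral_const_mul]
  rw [← integral_sub hE_int (hF_int.const_mul a)]
  refine norm_integral_le_of_norm_le
    (f := fun t => (rhoT N t).real E - a * (rhoT N t).real F) (hF_int.const_mul b) ?_
  filter_upwards [ae_mem_Ico_and_irrational (rhoN_absolutelyContinuous_volume N)] with t ht
  exact h t (Ico_subset_Icc_self ht.1)

end Measures

section Contraction

variable {N : ℕ} [N.AtLeastTwo]

theorem sum_digitWeight (n : ℕ) {t : ℝ} (ht : 0 ≤ t) :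
    ∑ i ∈ Finset.range n, digitWeight N i t = n / (N + n + t - 1) := by
  induction n with
  | zero => simp
  | succ n ih =>
    have h_denom := one_lt_branch_denom N n ht
    have h_pos : (0 : ℝ) < N + n + t - 1 := by linarith
    have h_shift : (N : ℝ) + (n + 1 : ℕ) + t - 1 = N + n + t := by
      push_cast
      ring
    rw [Finset.sum_range_succ, ih, h_shift, digitWeight]
    push_cast
    field_simp
    ring

theorem sum_digitWeight_le_one (n : ℕ) {t : ℝ} (ht : 0 ≤ t) :
    ∑ i ∈ Finset.range n, digitWeight N i t ≤ 1 := by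
  have h_two := two_le_cast N
  rw [sum_digitWeight n ht]
  exact div_le_one_of_le₀ (by linarith) (by linarith [n.cast_nonneg (α := ℝ)])

theorem abs_sum_digitWeight_sub_le (n : ℕ) {s t : ℝ} (hs : 0 ≤ s) (ht : 0 ≤ t) :
    |∑ i ∈ Finset.range n, (digitWeight N i s - digitWeight N i t)| ≤ 1 / 4 * |s - t| := by
  have h_two := two_le_cast N
  have hn : (0 : ℝ) ≤ n := n.cast_nonneg
  have hs_le : (n : ℝ) + 1 ≤ N + n + s - 1 := by linarith
  have ht_le : (n : ℝ) + 1 ≤ N + n + t - 1 := by linarith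
  have h_denom : ((n : ℝ) + 1) * (n + 1) ≤ (N + n + s - 1) * (N + n + t - 1) :=
    mul_le_mul hs_le ht_le (by positivity) (by linarith)
  have h_pos : (0 : ℝ) < (N + n + s - 1) * (N + n + t - 1) := lt_of_lt_of_le (by positivity) h_denom
  have h_ratio : n / (((N : ℝ) + n + s - 1) * (N + n + t - 1)) ≤ 1 / 4 := by
    rw [div_le_iff₀ h_pos]
    nlinarith [sq_nonneg ((n : ℝ) - 1)]
  have h_diff : (n : ℝ) / (N + n + s - 1) - n / (N + n + t - 1)
      = n / ((N + n + s - 1) * (N + n + t - 1)) * (t - s) := by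
    have hs_ne : (N : ℝ) + n + s - 1 ≠ 0 := by linarith
    have ht_ne : (N : ℝ) + n + t - 1 ≠ 0 := by linarith
    field_simp
    ring
  rw [Finset.sum_sub_distrib, sum_digitWeight n hs, sum_digitWeight n ht, h_diff, abs_mul,
    abs_of_nonneg (div_nonneg hn h_pos.le), abs_sub_comm]
  exact mul_le_mul_of_nonneg_right h_ratio (abs_nonneg _)

theorem inverseBranch_le_succ (i : ℕ) {t : ℝ} (ht : 0 ≤ t) :
    inverseBranch N i t ≤ inverseBranch N (i + 1) t := by
  have h_pos := one_pos.trans (one_lt_branch_denom N i ht)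
  unfold inverseBranch
  push_cast
  gcongr
  linarith

variable {g : ℝ → ℝ} {L : ℝ}

theorem abs_sum_digitWeight_mul_sub_le (hL : 0 ≤ L)
    (hg : ∀ x ∈ Icc (0 : ℝ) 1, ∀ y ∈ Icc (0 : ℝ) 1, |g x - g y| ≤ L * |x - y|)
    {s t : ℝ} (hs : s ∈ Icc (0 : ℝ) 1) (ht : t ∈ Icc (0 : ℝ) 1) (n : ℕ) :
    |∑ i ∈ Finset.range n,
        digitWeight N i s * (g (inverseBranch N i s) - g (inverseBranch N i t))|
      ≤ 1 / 2 * L * |s - t| := by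
  have h_term (i : ℕ) :
      |digitWeight N i s * (g (inverseBranch N i s) - g (inverseBranch N i t))|
        ≤ digitWeight N i s * (1 / 2 * L * |s - t|) := by
    rw [abs_mul, abs_of_pos (digitWeight_pos i hs.1)]
    refine mul_le_mul_of_nonneg_left ?_ (digitWeight_pos i hs.1).le
    calc |g (inverseBranch N i s) - g (inverseBranch N i t)|
        ≤ L * |inverseBranch N i s - inverseBranch N i t| :=
          hg _ (inverseBranch_mem_Icc i hs) _ (inverseBranch_mem_Icc i ht)
      _ ≤ L * (1 / 2 * |s - t|) :=
          mul_le_mul_of_nonneg_left (abs_inverseBranch_sub_le i hs.1 ht.1) hL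
      _ = 1 / 2 * L * |s - t| := by ring
  calc _ ≤ ∑ i ∈ Finset.range n, digitWeight N i s * (1 / 2 * L * |s - t|) :=
        (Finset.abs_sum_le_sum_abs _ _).trans (Finset.sum_le_sum fun i _ => h_term i)
    _ = (∑ i ∈ Finset.range n, digitWeight N i s) * (1 / 2 * L * |s - t|) :=
        (Finset.sum_mul _ _ _).symm
    _ ≤ 1 / 2 * L * |s - t| :=
        mul_le_of_le_one_left (by positivity) (sum_digitWeight_le_one n hs.1)

theorem abs_sum_sub_mul_digitWeight_sub_le (hL : 0 ≤ L)
    (hg : ∀ x ∈ Icc (0 : ℝ) 1, ∀ y ∈ Icc (0 : ℝ) 1, |g x - g y| ≤ L * |x - y|)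
    {s t : ℝ} (hs : s ∈ Icc (0 : ℝ) 1) (ht : t ∈ Icc (0 : ℝ) 1) (n : ℕ) :
    |∑ i ∈ Finset.range n,
        (g (inverseBranch N i t) - g 1) * (digitWeight N i s - digitWeight N i t)|
      ≤ 1 / 4 * L * |s - t| := by
  have h_branch (i : ℕ) := inverseBranch_mem_Icc (N := N) i ht
  calc _ ≤ L * (1 - inverseBranch N 0 t) * (1 / 4 * |s - t|) := by
        refine abs_sum_mul_le_of_abs_sum_le (r := fun i => L * (1 - inverseBranch N i t))
          (fun n => abs_sum_digitWeight_sub_le n hs.1 ht.1) (fun i => ?_) (fun i => ?_) n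
        · refine (hg _ (h_branch i) 1 (right_mem_Icc.2 zero_le_one)).trans_eq ?_
          rw [abs_sub_comm, abs_of_nonneg (sub_nonneg.2 (h_branch i).2)]
        · rw [sub_sub_sub_cancel_right, ← mul_sub, sub_sub_sub_cancel_left]
          refine (hg _ (h_branch (i + 1)) _ (h_branch i)).trans_eq ?_
          rw [abs_of_nonneg (sub_nonneg.2 (inverseBranch_le_succ i ht.1))]
    _ ≤ L * 1 * (1 / 4 * |s - t|) := by
        gcongr
        linarith [(h_branch 0).1]
    _ = 1 / 4 * L * |s - t| := by ring

theorem abs_sub_le_of_hasSum_digitWeight_mul (hL : 0 ≤ L)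
    (hg : ∀ x ∈ Icc (0 : ℝ) 1, ∀ y ∈ Icc (0 : ℝ) 1, |g x - g y| ≤ L * |x - y|)
    {s t : ℝ} (hs : s ∈ Icc (0 : ℝ) 1) (ht : t ∈ Icc (0 : ℝ) 1) {us ut : ℝ}
    (hus : HasSum (fun i => digitWeight N i s * g (inverseBranch N i s)) us)
    (hut : HasSum (fun i => digitWeight N i t * g (inverseBranch N i t)) ut) :
    |us - ut| ≤ 3 / 4 * L * |s - t| := by
  -- Since the weights sum to `1`, replacing `g` by `g - g 1` does not change `us - ut`.
  have h_sum := (hus.sub ((hasSum_digitWeight (N := N) hs).mul_right (g 1))).sub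
    (hut.sub ((hasSum_digitWeight (N := N) ht).mul_right (g 1)))
  rw [one_mul, sub_sub_sub_cancel_right] at h_sum
  refine le_of_tendsto' h_sum.tendsto_sum_nat.abs fun n => ?_
  calc _ = |∑ i ∈ Finset.range n,
              digitWeight N i s * (g (inverseBranch N i s) - g (inverseBranch N i t))
            + ∑ i ∈ Finset.range n,
              (g (inverseBranch N i t) - g 1) * (digitWeight N i s - digitWeight N i t)| := by
        rw [← Finset.sum_add_distrib]
        congr 1
        exact Finset.sum_congr rfl fun i _ => by ring
    _ ≤ 1 / 2 * L * |s - t| + 1 / 4 * L * |s - t| :=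
        (abs_add_le _ _).trans (add_le_add (abs_sum_digitWeight_mul_sub_le hL hg hs ht n)
          (abs_sum_sub_mul_digitWeight_sub_le hL hg hs ht n))
    _ = 3 / 4 * L * |s - t| := by ring

end Contraction

section GaussKuzmin

variable {N : ℕ} [N.AtLeastTwo]

/-- A Lipschitz constant of `t ↦ ρ^t_N(C) / ρ_N(C)` which is uniform in the set `C`. -/
noncomputable def lipschitzConst (N : ℕ) : ℝ := N ^ 2 * log (N / (N - 1))

theorem lipschitzConst_pos : 0 < lipschitzConst N :=
  mul_pos (sq_pos_of_pos (by linarith [two_le_cast N])) (log_div_sub_one_pos N)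

theorem cast_le_lipschitzConst_mul_invDensity {x : ℝ} (hx : x ∈ Icc (0 : ℝ) 1) :
    (N : ℝ) ≤ lipschitzConst N * invDensity N x := by
  have h_two := two_le_cast N
  have h_log := (log_div_sub_one_pos N).ne'
  have h_pos : 0 < x + (N : ℝ) - 1 := by linarith [hx.1]
  calc (N : ℝ) ≤ N * (N / (x + N - 1)) :=
        le_mul_of_one_le_right (by linarith) ((one_le_div h_pos).2 (by linarith [hx.2]))
    _ = lipschitzConst N * invDensity N x := by
        unfold lipschitzConst invDensity
        field_simp

theorem abs_condDensity_sub_le {s t x : ℝ} (hs : s ∈ Icc (0 : ℝ) 1) (ht : t ∈ Icc (0 : ℝ) 1)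
    (hx : x ∈ Icc (0 : ℝ) 1) : |condDensity N s x - condDensity N t x| ≤ N * |s - t| := by
  have h_two := two_le_cast N
  have hp := one_le_condDensity_denom (N := N) hs hx
  have hq := one_le_condDensity_denom (N := N) ht hx
  have hb_le : (N : ℝ) - 1 + t ≤ N - (1 - x) * (1 - t) := by nlinarith [hx.1, ht.2]
  have hpq : ((N : ℝ) - (1 - x) * (1 - s)) - (N - (1 - x) * (1 - t)) = (s - t) * (1 - x) := by
    ring
  have hb : (0 : ℝ) ≤ N - 1 + t := by linarith [ht.1]
  have hsb : (N : ℝ) - 1 + s = (N - 1 + t) + (s - t) := by ring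
  unfold condDensity
  rw [hsb]
  generalize (N : ℝ) - (1 - x) * (1 - s) = p at *
  generalize (N : ℝ) - (1 - x) * (1 - t) = q at *
  generalize (N : ℝ) - 1 + t = b at *
  have h_diff : N * (b + (s - t)) / p ^ 2 - N * b / q ^ 2
      = N * (s - t) * ((q ^ 2 - b * (1 - x) * (p + q)) / (p ^ 2 * q ^ 2)) := by
    field_simp
    linear_combination (-b * (p + q)) * hpq
  have h_ratio : |(q ^ 2 - b * (1 - x) * (p + q)) / (p ^ 2 * q ^ 2)| ≤ 1 := by
    have hbx_nonneg : 0 ≤ b * (1 - x) := mul_nonneg hb (by linarith [hx.2])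
    have hbx_le : b * (1 - x) ≤ q := (mul_le_of_le_one_right hb (by linarith [hx.1])).trans hb_le
    have hp_sq : 1 ≤ p ^ 2 := one_le_pow₀ hp
    have hpq_one : 1 ≤ p * q := one_le_mul_of_one_le_of_one_le hp hq
    rw [abs_div, abs_of_pos (by positivity : 0 < p ^ 2 * q ^ 2)]
    refine div_le_one_of_le₀ (abs_le.2 ⟨?_, ?_⟩) (by positivity)
    · nlinarith [mul_le_mul_of_nonneg_right hbx_le (by linarith : 0 ≤ p + q)]
    · nlinarith [mul_nonneg hbx_nonneg (by linarith : 0 ≤ p + q), sq_nonneg q]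
  rw [h_diff, abs_mul, abs_mul, Nat.abs_cast]
  exact mul_le_of_le_one_right (by positivity) h_ratio

theorem abs_measureReal_rhoT_sub_le {E : Set ℝ} (hE : MeasurableSet E) {s t : ℝ}
    (hs : s ∈ Icc (0 : ℝ) 1) (ht : t ∈ Icc (0 : ℝ) 1) :
    |(rhoT N s).real E - (rhoT N t).real E|
      ≤ lipschitzConst N * (rhoN N).real E * |s - t| := by
  have h_invDensity : 0 ≤ᵐ[volume.restrict (Icc 0 1)] invDensity N :=
    ae_restrict_of_forall_mem measurableSet_Icc fun x hx => (invDensity_pos hx.1).le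
  refine (abs_measureReal_withDensity_sub_le (integrable_condDensity hs)
    (ae_of_all _ (condDensity_nonneg hs.1)) (integrable_condDensity ht)
    (ae_of_all _ (condDensity_nonneg ht.1)) integrable_invDensity h_invDensity
    (c := lipschitzConst N * |s - t|)
    (ae_restrict_of_forall_mem measurableSet_Icc fun x hx => ?_) hE).trans_eq ?_
  · calc |condDensity N s x - condDensity N t x| ≤ N * |s - t| := abs_condDensity_sub_le hs ht hx
      _ ≤ lipschitzConst N * invDensity N x * |s - t| :=
          mul_le_mul_of_nonneg_right (cast_le_lipschitzConst_mul_invDensity hx) (abs_nonneg _)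
      _ = lipschitzConst N * |s - t| * invDensity N x := mul_right_comm _ _ _
  · exact mul_right_comm _ _ _

theorem abs_measureReal_rhoT_preimage_iterate_sub_le {E : Set ℝ} (hE : MeasurableSet E) (m : ℕ)
    {s t : ℝ} (hs : s ∈ Icc (0 : ℝ) 1) (ht : t ∈ Icc (0 : ℝ) 1) :
    |(rhoT N s).real ((RN N)^[m] ⁻¹' E) - (rhoT N t).real ((RN N)^[m] ⁻¹' E)|
      ≤ (3 / 4) ^ m * lipschitzConst N * (rhoN N).real E * |s - t| := by
  induction m generalizing s t with
  | zero => simpa using abs_measureReal_rhoT_sub_le hE hs ht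
  | succ m ih =>
    have hE_m := measurableSet_preimage_RN_iterate N m hE
    have hK := lipschitzConst_pos (N := N)
    rw [Function.iterate_succ, preimage_comp]
    refine (abs_sub_le_of_hasSum_digitWeight_mul
      (g := fun t => (rhoT N t).real ((RN N)^[m] ⁻¹' E)) (by positivity)
      (fun x hx y hy => ih hx hy) hs ht (hasSum_digitWeight_mul_rhoT hs hE_m)
      (hasSum_digitWeight_mul_rhoT ht hE_m)).trans_eq ?_
    ring

theorem abs_measureReal_rhoT_preimage_iterate_sub_rhoN_le {E : Set ℝ} (hE : MeasurableSet E)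
    (m : ℕ) {s : ℝ} (hs : s ∈ Icc (0 : ℝ) 1) :
    |(rhoT N s).real ((RN N)^[m] ⁻¹' E) - (rhoN N).real E|
      ≤ (3 / 4) ^ m * lipschitzConst N * (rhoN N).real E := by
  have hK := lipschitzConst_pos (N := N)
  have h_mix := abs_measureReal_rhoN_sub_le (N := N) (measurableSet_preimage_RN_iterate N m hE)
    MeasurableSet.univ (a := (rhoT N s).real ((RN N)^[m] ⁻¹' E))
    (b := (3 / 4) ^ m * lipschitzConst N * (rhoN N).real E) fun t ht => by
      have := isProbabilityMeasure_rhoT (N := N) ht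
      have h_dist : |t - s| ≤ 1 := abs_sub_le_of_nonneg_of_le ht.1 ht.2 hs.1 hs.2
      rw [probReal_univ, mul_one, mul_one]
      exact (abs_measureReal_rhoT_preimage_iterate_sub_le hE m ht hs).trans
        (mul_le_of_le_one_right (by positivity) h_dist)
  rwa [probReal_univ, mul_one, mul_one, measureReal_preimage_RN_iterate m hE, abs_sub_comm]
    at h_mix

end GaussKuzmin

section Cylinders

variable {N : ℕ}

/-- The cylinder of points whose digits start with `N + i₁, …, N + i_k`, for the word
`[i₁, …, i_k]`. -/
def digitCylinder (N : ℕ) : List ℕ → Set ℝ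
  | [] => univ
  | i :: w => firstDigitSet N i ∩ RN N ⁻¹' digitCylinder N w

/-- The parameter `u_{i_k}(⋯ u_{i_1}(t))` of the conditional law of `R_N^k` under `ρ^t_N` on the
cylinder of the word `w = [i₁, …, i_k]`. -/
noncomputable def backwardPoint (N : ℕ) (w : List ℕ) (t : ℝ) : ℝ :=
  w.foldl (fun t i => inverseBranch N i t) t

theorem measurableSet_digitCylinder (w : List ℕ) : MeasurableSet (digitCylinder N w) := by
  induction w with
  | nil => exact MeasurableSet.univ
  | cons i w ih => exact (measurableSet_firstDigitSet N i).inter (measurable_RN N ih)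

theorem mem_digitCylinder_ofFn {k : ℕ} {w : Fin k → ℕ} {x : ℝ} :
    x ∈ digitCylinder N (List.ofFn w) ↔ ∀ j : Fin k, digit N j x = N + w j := by
  induction k generalizing x with
  | zero => simp [digitCylinder]
  | succ k ih =>
    rw [List.ofFn_succ, Fin.forall_fin_succ]
    exact and_congr Iff.rfl ih

theorem pairwise_disjoint_digitCylinder_ofFn (k : ℕ) :
    Pairwise (Function.onFun Disjoint fun w : Fin k → ℕ => digitCylinder N (List.ofFn w)) := by
  refine fun v w hvw => Set.disjoint_left.2 fun x hv hw => hvw (funext fun j => ?_)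
  simpa using (mem_digitCylinder_ofFn.1 hv j).symm.trans (mem_digitCylinder_ofFn.1 hw j)

variable [N.AtLeastTwo]

theorem backwardPoint_mem_Icc (w : List ℕ) {t : ℝ} (ht : t ∈ Icc (0 : ℝ) 1) :
    backwardPoint N w t ∈ Icc (0 : ℝ) 1 := by
  induction w generalizing t with
  | nil => exact ht
  | cons i _ ih => exact ih (inverseBranch_mem_Icc i ht)

theorem rhoT_digitCylinder_inter_preimage (w : List ℕ) {t : ℝ} (ht : t ∈ Icc (0 : ℝ) 1)
    {E : Set ℝ} (hE : MeasurableSet E) :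
    rhoT N t (digitCylinder N w ∩ (RN N)^[w.length] ⁻¹' E)
      = rhoT N t (digitCylinder N w) * rhoT N (backwardPoint N w t) E := by
  induction w generalizing t with
  | nil =>
    have := isProbabilityMeasure_rhoT (N := N) ht
    rw [digitCylinder, measure_univ, one_mul, univ_inter]
    rfl
  | cons i w ih =>
    have hw := measurableSet_digitCylinder (N := N) w
    have h_split : digitCylinder N (i :: w) ∩ (RN N)^[(i :: w).length] ⁻¹' E
        = firstDigitSet N i ∩ RN N ⁻¹' (digitCylinder N w ∩ (RN N)^[w.length] ⁻¹' E) :=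
      inter_assoc _ _ _
    rw [h_split, rhoT_firstDigitSet_inter_preimage i ht.1
        (hw.inter (measurableSet_preimage_RN_iterate N _ hE)), ih (inverseBranch_mem_Icc i ht),
      digitCylinder, rhoT_firstDigitSet_inter_preimage i ht.1 hw, mul_assoc]
    rfl

theorem rhoT_digitCylinder_ne_zero (w : List ℕ) {t : ℝ} (ht : t ∈ Icc (0 : ℝ) 1) :
    rhoT N t (digitCylinder N w) ≠ 0 := by
  induction w generalizing t with
  | nil =>
    have := isProbabilityMeasure_rhoT (N := N) ht
    exact IsProbabilityMeasure.ne_zero (rhoT N t) ∘ Measure.measure_univ_eq_zero.1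
  | cons i w ih =>
    rw [digitCylinder, rhoT_firstDigitSet_inter_preimage i ht.1 (measurableSet_digitCylinder w)]
    exact mul_ne_zero (ENNReal.ofReal_pos.2 (digitWeight_pos i ht.1)).ne'
      (ih (inverseBranch_mem_Icc i ht))

theorem measureReal_rhoN_digitCylinder_pos (w : List ℕ) : 0 < (rhoN N).real (digitCylinder N w) :=
  ENNReal.toReal_pos (fun h => rhoT_digitCylinder_ne_zero w (left_mem_Icc.2 zero_le_one)
    (rhoT_absolutelyContinuous_volume N 0 (volume_absolutelyContinuous_rhoN h)))
    (measure_ne_top _ _)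

theorem abs_measureReal_rhoN_digitCylinder_inter_sub_le (w : List ℕ) {E : Set ℝ}
    (hE : MeasurableSet E) {a b : ℝ}
    (h : ∀ t ∈ Icc (0 : ℝ) 1, |(rhoT N (backwardPoint N w t)).real E - a| ≤ b) :
    |(rhoN N).real (digitCylinder N w ∩ (RN N)^[w.length] ⁻¹' E)
        - a * (rhoN N).real (digitCylinder N w)| ≤ b * (rhoN N).real (digitCylinder N w) := by
  have hw := measurableSet_digitCylinder (N := N) w
  refine abs_measureReal_rhoN_sub_le (hw.inter (measurableSet_preimage_RN_iterate N _ hE)) hw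
    fun t ht => ?_
  rw [measureReal_def, rhoT_digitCylinder_inter_preimage w ht hE, ENNReal.toReal_mul,
    ← measureReal_def, ← measureReal_def, mul_comm, ← sub_mul, abs_mul,
    abs_of_nonneg measureReal_nonneg]
  exact mul_le_mul_of_nonneg_right (h t ht) measureReal_nonneg

theorem exists_abs_backwardPoint_sub_le_pow (k : ℕ) {s : ℝ} (hs : s ∈ Ico (0 : ℝ) 1) :
    ∃ w : List ℕ, w.length = k ∧
      ∀ t ∈ Icc (0 : ℝ) 1, |backwardPoint N w t - s| ≤ (1 / 2) ^ k := by
  induction k generalizing s with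
  | zero =>
    refine ⟨[], rfl, fun t ht => ?_⟩
    rw [pow_zero]
    exact abs_sub_le_of_nonneg_of_le ht.1 ht.2 hs.1 hs.2.le
  | succ k ih =>
    have h_mem := RN_mem_Ico N s
    obtain ⟨w, rfl, hw⟩ := ih h_mem
    obtain ⟨i, hi⟩ := exists_mem_firstDigitSet (N := N) hs
    refine ⟨w ++ [i], List.length_append, fun t ht => ?_⟩
    have h_append : backwardPoint N (w ++ [i]) t = inverseBranch N i (backwardPoint N w t) :=
      List.foldl_append
    calc |backwardPoint N (w ++ [i]) t - s|
        = |inverseBranch N i (backwardPoint N w t) - inverseBranch N i (RN N s)| := by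
          rw [h_append, inverseBranch_RN hs.2.ne hi]
      _ ≤ 1 / 2 * |backwardPoint N w t - RN N s| :=
          abs_inverseBranch_sub_le i (backwardPoint_mem_Icc w ht).1 h_mem.1
      _ ≤ 1 / 2 * (1 / 2) ^ w.length := mul_le_mul_of_nonneg_left (hw t ht) (by norm_num)
      _ = (1 / 2) ^ (w.length + 1) := (pow_succ' _ _).symm

theorem exists_abs_backwardPoint_sub_le {s δ : ℝ} (hs : s ∈ Icc (0 : ℝ) 1) (hδ : 0 < δ) :
    ∃ w : List ℕ, 1 ≤ w.length ∧ ∀ t ∈ Icc (0 : ℝ) 1, |backwardPoint N w t - s| ≤ δ := by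
  rw [← closure_Ico zero_ne_one] at hs
  obtain ⟨r, hr, hsr⟩ := Metric.mem_closure_iff.1 hs (δ / 2) (half_pos hδ)
  obtain ⟨k, hk⟩ := exists_pow_lt_of_lt_one (half_pos hδ) (by norm_num : (1 / 2 : ℝ) < 1)
  obtain ⟨w, hw_length, hw⟩ := exists_abs_backwardPoint_sub_le_pow (N := N) (k + 1) hr
  refine ⟨w, hw_length ▸ Nat.le_add_left 1 k, fun t ht => ?_⟩
  rw [dist_comm, Real.dist_eq] at hsr
  calc |backwardPoint N w t - s| ≤ |backwardPoint N w t - r| + |r - s| := abs_sub_le _ _ _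
    _ ≤ δ / 2 + δ / 2 := by
        refine add_le_add ((hw t ht).trans (le_trans ?_ hk.le)) hsr.le
        exact pow_le_pow_of_le_one (by norm_num) (by norm_num) k.le_succ
    _ = δ := add_halves δ

end Cylinders

section MixingCoefficients

variable {N : ℕ}

/-- The event that the first `k` digits of an irrational point of `[0,1]` form a word in `S`. -/
def digitEvent (N k : ℕ) (S : Set (Fin k → ℤ)) : Set ℝ :=
  {y | y ∈ Icc (0 : ℝ) 1 ∧ Irrational y ∧ (fun j : Fin k => digit N j y) ∈ S}

theorem exists_digit_eq (j : ℕ) {x : ℝ} (hx : x ∈ Ico (0 : ℝ) 1) :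
    ∃ i : ℕ, digit N j x = N + i :=
  have h_maps : MapsTo (RN N) (Ico 0 1) (Ico 0 1) := fun y _ => RN_mem_Ico N y
  exists_mem_firstDigitSet (h_maps.iterate j hx)

theorem digitEvent_ae_eq_iUnion_digitCylinder (k : ℕ) (S : Set (Fin k → ℤ)) :
    digitEvent N k S =ᵐ[rhoN N] ⋃ w : {w : Fin k → ℕ // (fun j => (N : ℤ) + w j) ∈ S},
      digitCylinder N (List.ofFn w.1) := by
  filter_upwards [ae_mem_Ico_and_irrational (rhoN_absolutelyContinuous_volume N)] with x hx
  choose i hi using fun j : Fin k => exists_digit_eq (N := N) j hx.1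
  refine propext ⟨fun h => ?_, fun h => ⟨Ico_subset_Icc_self hx.1, hx.2, ?_⟩⟩
  · exact mem_iUnion.2 ⟨⟨i, funext hi ▸ h.2.2⟩, mem_digitCylinder_ofFn.2 hi⟩
  · obtain ⟨⟨w, hw⟩, hxw⟩ := mem_iUnion.1 h
    rwa [funext (mem_digitCylinder_ofFn.1 hxw)]

theorem digitEvent_singleton_ae_eq_digitCylinder (w : List ℕ) :
    digitEvent N w.length {fun j => (N : ℤ) + w.get j} =ᵐ[rhoN N] digitCylinder N w := by
  filter_upwards [ae_mem_Ico_and_irrational (rhoN_absolutelyContinuous_volume N)] with x hx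
  have h_mem := mem_digitCylinder_ofFn (N := N) (w := w.get) (x := x)
  rw [List.ofFn_get] at h_mem
  exact propext ⟨fun h => h_mem.2 (congrFun h.2.2), fun h =>
    ⟨Ico_subset_Icc_self hx.1, hx.2, funext (h_mem.1 h)⟩⟩

theorem preimage_RN_iterate_add (k m : ℕ) (C : Set ℝ) :
    (RN N)^[k + (m + 1) - 1] ⁻¹' C = (RN N)^[k] ⁻¹' ((RN N)^[m] ⁻¹' C) := by
  rw [← add_assoc, Nat.add_sub_cancel, add_comm, Function.iterate_add, preimage_comp]

theorem psi_nonneg (N : ℕ) (μ : Measure ℝ) (n : ℕ) : 0 ≤ psi N μ n := by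
  refine Real.sSup_nonneg ?_
  rintro r ⟨k, -, A, B, -, -, -, rfl⟩
  exact abs_nonneg _

variable [N.AtLeastTwo] {C : Set ℝ}

theorem abs_measureReal_rhoN_digitEvent_inter_sub_le {k : ℕ} (S : Set (Fin k → ℤ)) {E : Set ℝ}
    (hE : MeasurableSet E) {a b : ℝ}
    (h : ∀ t ∈ Icc (0 : ℝ) 1, |(rhoT N t).real E - a| ≤ b) :
    |(rhoN N).real (digitEvent N k S ∩ (RN N)^[k] ⁻¹' E) - a * (rhoN N).real (digitEvent N k S)|
      ≤ b * (rhoN N).real (digitEvent N k S) := by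
  have h_ae := digitEvent_ae_eq_iUnion_digitCylinder (N := N) k S
  rw [measureReal_inter_congr_left h_ae, measureReal_congr h_ae]
  have h_disjoint := (pairwise_disjoint_digitCylinder_ofFn (N := N) k).comp_of_injective
    (Subtype.val_injective (p := fun w : Fin k → ℕ => (fun j => (N : ℤ) + w j) ∈ S))
  refine abs_measureReal_iUnion_inter_sub_le (fun w => measurableSet_digitCylinder _) h_disjoint
    (measurableSet_preimage_RN_iterate N k hE) fun w => ?_
  have h_cylinder := abs_measureReal_rhoN_digitCylinder_inter_sub_le (List.ofFn w.1) hE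
    fun t ht => h (backwardPoint N (List.ofFn w.1) t) (backwardPoint_mem_Icc _ ht)
  rwa [List.length_ofFn] at h_cylinder

theorem abs_rhoT_div_rhoN_sub_one_le_geometric (m : ℕ) {t : ℝ} (ht : t ∈ Icc (0 : ℝ) 1)
    (hC : MeasurableSet C) (hpos : 0 < (rhoN N).real ((RN N)^[m] ⁻¹' C)) :
    |(rhoT N t).real ((RN N)^[m] ⁻¹' C) / (rhoN N).real ((RN N)^[m] ⁻¹' C) - 1|
      ≤ (3 / 4) ^ m * lipschitzConst N := by
  rw [abs_div_sub_one_le_iff hpos, measureReal_preimage_RN_iterate m hC]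
  exact abs_measureReal_rhoT_preimage_iterate_sub_rhoN_le hC m ht

variable (N) in
theorem eps_le_geometric (m : ℕ) : eps N (m + 1) ≤ (3 / 4) ^ m * lipschitzConst N := by
  refine csSup_le ⟨_, 0, left_mem_Icc.2 zero_le_one, univ, MeasurableSet.univ, ?_, rfl⟩ ?_
  · simp
  · rintro r ⟨t, ht, C, hC, hpos, rfl⟩
    exact abs_rhoT_div_rhoN_sub_one_le_geometric m ht hC hpos

theorem abs_measureReal_rhoT_sub_rhoN_le_eps (m : ℕ) {t : ℝ} (ht : t ∈ Icc (0 : ℝ) 1)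
    (hC : MeasurableSet C) (hpos : 0 < (rhoN N).real ((RN N)^[m] ⁻¹' C)) :
    |(rhoT N t).real ((RN N)^[m] ⁻¹' C) - (rhoN N).real ((RN N)^[m] ⁻¹' C)|
      ≤ eps N (m + 1) * (rhoN N).real ((RN N)^[m] ⁻¹' C) := by
  refine (abs_div_sub_one_le_iff hpos).1 (le_csSup ⟨(3 / 4) ^ m * lipschitzConst N, ?_⟩
    ⟨t, ht, C, hC, hpos, rfl⟩)
  rintro r ⟨s, hs, D, hD, hD_pos, rfl⟩
  exact abs_rhoT_div_rhoN_sub_one_le_geometric m hs hD hD_pos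

theorem abs_digitEvent_ratio_sub_one_le_eps (m : ℕ) {k : ℕ} (S : Set (Fin k → ℤ))
    (hC : MeasurableSet C)
    (hne : (rhoN N).real (digitEvent N k S) * (rhoN N).real ((RN N)^[k + (m + 1) - 1] ⁻¹' C) ≠ 0) :
    |(rhoN N).real (digitEvent N k S ∩ (RN N)^[k + (m + 1) - 1] ⁻¹' C)
        / ((rhoN N).real (digitEvent N k S) * (rhoN N).real ((RN N)^[k + (m + 1) - 1] ⁻¹' C)) - 1|
      ≤ eps N (m + 1) := by
  have hE := measurableSet_preimage_RN_iterate N m hC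
  rw [preimage_RN_iterate_add, measureReal_preimage_RN_iterate k hE] at hne ⊢
  have hE_pos := measureReal_nonneg.lt_of_ne' (right_ne_zero_of_mul hne)
  have h_prod_pos := (mul_nonneg measureReal_nonneg measureReal_nonneg).lt_of_ne' hne
  rw [abs_div_sub_one_le_iff h_prod_pos, mul_comm ((rhoN N).real _), ← mul_assoc]
  exact abs_measureReal_rhoN_digitEvent_inter_sub_le S hE fun t ht =>
    abs_measureReal_rhoT_sub_rhoN_le_eps m ht hC hE_pos

variable (N) in
theorem psi_le_eps (m : ℕ) : psi N (rhoN N) (m + 1) ≤ eps N (m + 1) := by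
  refine csSup_le ⟨_, 1, le_rfl, _, _, ⟨univ, rfl⟩, ⟨univ, MeasurableSet.univ, rfl⟩, ?_, rfl⟩ ?_
  · have h_ae : digitEvent N 1 univ =ᵐ[rhoN N] univ := by
      filter_upwards [ae_mem_Ico_and_irrational (rhoN_absolutelyContinuous_volume N)] with x hx
      exact eq_true ⟨Ico_subset_Icc_self hx.1, hx.2, trivial⟩
    have h_event : rhoN N (digitEvent N 1 univ) = 1 := (measure_congr h_ae).trans measure_univ
    change (rhoN N (digitEvent N 1 univ)).toReal * _ ≠ 0
    simp [h_event]
  · rintro r ⟨k, -, A, B, ⟨S, rfl⟩, ⟨C, hC, rfl⟩, hne, rfl⟩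
    exact abs_digitEvent_ratio_sub_one_le_eps m S hC hne

theorem abs_measureReal_digitCylinder_inter_sub_le_psi (m : ℕ) {w : List ℕ} (hw : 1 ≤ w.length)
    (hC : MeasurableSet C) (hpos : 0 < (rhoN N).real ((RN N)^[m] ⁻¹' C)) :
    |(rhoN N).real (digitCylinder N w ∩ (RN N)^[w.length] ⁻¹' ((RN N)^[m] ⁻¹' C))
        - (rhoN N).real (digitCylinder N w) * (rhoN N).real ((RN N)^[m] ⁻¹' C)|
      ≤ psi N (rhoN N) (m + 1)
        * ((rhoN N).real (digitCylinder N w) * (rhoN N).real ((RN N)^[m] ⁻¹' C)) := by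
  have hE := measurableSet_preimage_RN_iterate N m hC
  have h_prod_pos := mul_pos (measureReal_rhoN_digitCylinder_pos (N := N) w) hpos
  have h_ae := digitEvent_singleton_ae_eq_digitCylinder (N := N) w
  rw [← abs_div_sub_one_le_iff h_prod_pos]
  refine le_csSup ⟨eps N (m + 1), ?_⟩
    ⟨w.length, hw, _, _, ⟨{fun j => (N : ℤ) + w.get j}, rfl⟩, ⟨C, hC, rfl⟩, ?_⟩
  · rintro r ⟨k, -, A, B, ⟨S, rfl⟩, ⟨D, hD, rfl⟩, hne, rfl⟩
    exact abs_digitEvent_ratio_sub_one_le_eps m S hD hne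
  · simp only [← measureReal_def]
    rw [← digitEvent, preimage_RN_iterate_add, measureReal_preimage_RN_iterate _ hE,
      measureReal_inter_congr_left h_ae, measureReal_congr h_ae]
    exact ⟨h_prod_pos.ne', rfl⟩

theorem abs_measureReal_rhoT_sub_rhoN_le_psi_add (m : ℕ) {s δ : ℝ} (hs : s ∈ Icc (0 : ℝ) 1)
    (hδ : 0 < δ) (hC : MeasurableSet C) (hpos : 0 < (rhoN N).real ((RN N)^[m] ⁻¹' C)) :
    |(rhoT N s).real ((RN N)^[m] ⁻¹' C) - (rhoN N).real ((RN N)^[m] ⁻¹' C)|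
      ≤ (psi N (rhoN N) (m + 1) + δ) * (rhoN N).real ((RN N)^[m] ⁻¹' C) := by
  have hE := measurableSet_preimage_RN_iterate N m hC
  have hK := lipschitzConst_pos (N := N)
  obtain ⟨w, hw_length, hw⟩ := exists_abs_backwardPoint_sub_le (N := N) hs (div_pos hδ hK)
  have h_psi := abs_measureReal_digitCylinder_inter_sub_le_psi m hw_length hC hpos
  have h_near := abs_measureReal_rhoN_digitCylinder_inter_sub_le w hE fun t ht =>
    (abs_measureReal_rhoT_sub_le hE (backwardPoint_mem_Icc w ht) hs).trans
      (mul_le_mul_of_nonneg_left (hw t ht) (mul_nonneg hK.le hpos.le))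
  have hw_pos := measureReal_rhoN_digitCylinder_pos (N := N) w
  generalize (rhoN N).real (digitCylinder N w ∩ _) = x at h_psi h_near
  generalize (rhoN N).real (digitCylinder N w) = a at *
  generalize (rhoT N s).real _ = f at *
  generalize (rhoN N).real ((RN N)^[m] ⁻¹' C) = e at *
  refine le_of_mul_le_mul_right ?_ hw_pos
  calc |f - e| * a = |f * a - a * e| := by
        rw [mul_comm a, ← sub_mul, abs_mul, abs_of_pos hw_pos]
    _ ≤ |f * a - x| + |x - a * e| := abs_sub_le _ _ _
    _ ≤ lipschitzConst N * e * (δ / lipschitzConst N) * a + psi N (rhoN N) (m + 1) * (a * e) :=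
        add_le_add (abs_sub_comm x _ ▸ h_near) h_psi
    _ = (psi N (rhoN N) (m + 1) + δ) * e * a := by
        field_simp
        ring

variable (N) in
theorem eps_le_psi (m : ℕ) : eps N (m + 1) ≤ psi N (rhoN N) (m + 1) := by
  refine csSup_le ⟨_, 0, left_mem_Icc.2 zero_le_one, univ, MeasurableSet.univ, ?_, rfl⟩ ?_
  · simp
  · rintro r ⟨s, hs, C, hC, hpos, rfl⟩
    exact le_of_forall_pos_le_add fun δ hδ => (abs_div_sub_one_le_iff hpos).2
      (abs_measureReal_rhoT_sub_rhoN_le_psi_add m hs hδ hC hpos)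

theorem psi_eq_eps {n : ℕ} (hn : 1 ≤ n) : psi N (rhoN N) n = eps N n := by
  obtain ⟨m, rfl⟩ := Nat.exists_eq_add_of_le' hn
  exact le_antisymm (psi_le_eps N m) (eps_le_psi N m)

end MixingCoefficients

theorem stmt19 (N : ℕ) (hN : 2 ≤ N) (n : ℕ) (hn : 1 ≤ n) :
    psi N (rhoN N) n = eps N n ∧
    Filter.Tendsto (fun m => psi N (rhoN N) m) Filter.atTop (nhds 0) := by
  have : N.AtLeastTwo := ⟨hN⟩
  have h_geometric : Tendsto (fun m : ℕ => (3 / 4) ^ m * lipschitzConst N) atTop (nhds 0) := by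
    simpa only [zero_mul] using (tendsto_pow_atTop_nhds_zero_of_lt_one (r := (3 / 4 : ℝ))
      (by norm_num) (by norm_num)).mul_const (lipschitzConst N)
  refine ⟨psi_eq_eps hn, (tendsto_add_atTop_iff_nat 1).1 ?_⟩
  exact squeeze_zero (fun m => psi_nonneg N (rhoN N) (m + 1))
    (fun m => (psi_le_eps N m).trans (eps_le_geometric N m)) h_geometric
end
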